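/- Let φ be a meromorphic Jacobi form of weight k and index m with poles supported on S, all poles being simple. Then: (1) the canonical Fourier coefficients satisfy h_{ℓ+2m} = h_ℓ for all ℓ ∈ ℤ; (2) for each s ∈ S the product D_s(τ)·A^s_m(τ,z) depends only on the class of s in S/ℤ²; and (3) for all τ ∈ ℍ and all z ∈ ℂ with z ≠ z_s for every s ∈ S, one has φ(τ,z) = φ^F(τ,z) + ∑_{s ∈ S/ℤ²} D_s(τ)·A^s_m(τ,z), the sum taken over any set of representatives of S/ℤ². -/

import Mathlib

noncomputable section

open Complex Filter Topology MeasureTheory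
open scoped Classical

/-- `ee x = e^{2πix}`. -/
def ee (x : ℂ) : ℂ := Complex.exp (2 * (Real.pi : ℂ) * Complex.I * x)

/-- The index-`m` elliptic transformation law on `ℍ × ℂ`. -/
def EllipticLaw (m : ℕ) (φ : ℂ → ℂ → ℂ) : Prop :=
  ∀ τ : ℂ, 0 < τ.im → ∀ z : ℂ, ∀ lam mu : ℤ,
    φ τ (z + (lam : ℂ) * τ + (mu : ℂ)) =
      ee (-(m : ℂ) * ((lam : ℂ) ^ 2 * τ + 2 * (lam : ℂ) * z)) * φ τ z

/-- The weight-`k` index-`m` modular transformation law on `ℍ × ℂ`. -/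
def ModularLaw (k : ℤ) (m : ℕ) (φ : ℂ → ℂ → ℂ) : Prop :=
  ∀ τ : ℂ, 0 < τ.im → ∀ z : ℂ, ∀ a b c d : ℤ, a * d - b * c = 1 →
    φ (((a : ℂ) * τ + (b : ℂ)) / ((c : ℂ) * τ + (d : ℂ))) (z / ((c : ℂ) * τ + (d : ℂ))) =
      ((c : ℂ) * τ + (d : ℂ)) ^ k *
        ee ((m : ℂ) * (c : ℂ) * z ^ 2 / ((c : ℂ) * τ + (d : ℂ))) * φ τ z

/-- The theta function `θ_{m,ℓ}(τ,z) = ∑_{r ≡ ℓ (mod 2m)} q^{r²/4m} y^r`. -/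
def jTheta (m : ℕ) (l : ℤ) (τ z : ℂ) : ℂ :=
  ∑' n : ℤ, ee (((l : ℂ) + 2 * (m : ℂ) * (n : ℂ)) ^ 2 / (4 * (m : ℂ)) * τ +
      ((l : ℂ) + 2 * (m : ℂ) * (n : ℂ)) * z)

/-- The point `z_s = ατ + β` for `s = (α,β) ∈ ℚ²`. -/
def zpt (s : ℚ × ℚ) (τ : ℂ) : ℂ := (s.1 : ℚ) * τ + (s.2 : ℚ)

/-- A meromorphic Jacobi form of weight `k` and index `m` with poles supported on `S`. -/
structure MeroJacobiForm (k : ℤ) (m : ℕ) (S : Set (ℚ × ℚ)) where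
  toFun : ℂ → ℂ → ℂ
  lattice_inv : ∀ s ∈ S, ∀ lam mu : ℤ, (s.1 + (lam : ℚ), s.2 + (mu : ℚ)) ∈ S
  sl_inv : ∀ s ∈ S, ∀ a b c d : ℤ, a * d - b * c = 1 →
      (s.1 * (a : ℚ) + s.2 * (c : ℚ), s.1 * (b : ℚ) + s.2 * (d : ℚ)) ∈ S
  finite_classes : Set.Finite {s : ℚ × ℚ | s ∈ S ∧ 0 ≤ s.1 ∧ s.1 < 1 ∧ 0 ≤ s.2 ∧ s.2 < 1}
  elliptic : EllipticLaw m toFun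
  modular : ModularLaw k m toFun
  holo : ∀ τ : ℂ, 0 < τ.im → ∀ z : ℂ, (∀ s ∈ S, z ≠ zpt s τ) →
      DifferentiableAt ℂ (fun p : ℂ × ℂ => toFun p.1 p.2) (τ, z)
  merom : ∀ τ : ℂ, 0 < τ.im → ∀ s ∈ S, ∃ (g : ℂ → ℂ) (nn : ℕ), AnalyticAt ℂ g (zpt s τ) ∧
      ∀ᶠ z in 𝓝[≠] (zpt s τ), toFun τ z = g z / (z - zpt s τ) ^ nn

/-- All poles of `Φ` are simple (order at most 1). -/
def HasSimplePoles {k : ℤ} {m : ℕ} {S : Set (ℚ × ℚ)} (Φ : MeroJacobiForm k m S) : Prop :=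
  ∀ τ : ℂ, 0 < τ.im → ∀ s ∈ S, ∃ g : ℂ → ℂ, AnalyticAt ℂ g (zpt s τ) ∧
    ∀ᶠ z in 𝓝[≠] (zpt s τ), Φ.toFun τ z = g z / (z - zpt s τ)

/-- `h` is the family of canonical Fourier coefficients of `φ`:
`h_ℓ(τ) = q^{ℓ²/4m}·(1/2)·lim_{ε→0⁺} [∫₀¹ φ(τ, x+iε-ℓτ/2m) e(-ℓ(x+iε)) dx
  + ∫₀¹ φ(τ, x-iε-ℓτ/2m) e(-ℓ(x-iε)) dx]`. -/
def IsCanonCoeff (m : ℕ) (φ : ℂ → ℂ → ℂ) (h : ℤ → ℂ → ℂ) : Prop :=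
  ∀ l : ℤ, ∀ τ : ℂ, 0 < τ.im →
    Filter.Tendsto (fun ε : ℝ =>
        (1 / 2 : ℂ) *
          ((∫ x in (0:ℝ)..1,
              φ τ ((x : ℂ) + (ε : ℂ) * Complex.I - (l : ℂ) * τ / (2 * (m : ℂ))) *
                ee (-(l : ℂ) * ((x : ℂ) + (ε : ℂ) * Complex.I))) +
            ∫ x in (0:ℝ)..1,
              φ τ ((x : ℂ) - (ε : ℂ) * Complex.I - (l : ℂ) * τ / (2 * (m : ℂ))) *
                ee (-(l : ℂ) * ((x : ℂ) - (ε : ℂ) * Complex.I))))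
      (𝓝[>] (0 : ℝ)) (𝓝 (ee (-(l : ℂ) ^ 2 * τ / (4 * (m : ℂ))) * h l τ))

/-- `D s τ = 2πi·e(mα z_s)·Res_{z=z_s} φ(τ,z)`, characterized via the limit defining the
residue at a simple pole. -/
def IsResidueFactor (m : ℕ) (S : Set (ℚ × ℚ)) (φ : ℂ → ℂ → ℂ) (D : ℚ × ℚ → ℂ → ℂ) : Prop :=
  ∀ s ∈ S, ∀ τ : ℂ, 0 < τ.im →
    Filter.Tendsto (fun z : ℂ =>
        2 * (Real.pi : ℂ) * Complex.I * ee ((m : ℂ) * (s.1 : ℚ) * zpt s τ) *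
          ((z - zpt s τ) * φ τ z))
      (𝓝[≠] (zpt s τ)) (𝓝 (D s τ))

/-- The rational function `R_c`. -/
def Rc (c : ℝ) (y : ℂ) : ℂ :=
  if (⌈c⌉ : ℝ) = c then 1 / 2 * y ^ ⌈c⌉ * (y + 1) / (y - 1) else y ^ ⌈c⌉ / (y - 1)

/-- The index-`m` averaging operator `Av^{(m)}[F](τ,z) = ∑_{λ∈ℤ} q^{mλ²} y^{2mλ} F(q^λ y)`. -/
def Av (m : ℕ) (F : ℂ → ℂ) (τ z : ℂ) : ℂ :=
  ∑' lam : ℤ, ee ((m : ℂ) * (lam : ℂ) ^ 2 * τ + 2 * (m : ℂ) * (lam : ℂ) * z) *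
      F (ee ((lam : ℂ) * τ + z))

/-- The Appell–Lerch sum `A^s_m(τ,z) = e(-mα z_s)·Av^{(m)}[R_{-2mα}(y/y_s)]`. -/
def AppellA (m : ℕ) (s : ℚ × ℚ) (τ z : ℂ) : ℂ :=
  ee (-(m : ℂ) * (s.1 : ℚ) * zpt s τ) *
    Av m (fun w => Rc ((-(2 * (m : ℚ) * s.1) : ℚ) : ℝ) (w / ee (zpt s τ))) τ z

/-- The finite part `φ^F(τ,z) = ∑_{ℓ=0}^{2m-1} h_ℓ(τ)·θ_{m,ℓ}(τ,z)`. -/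
def finitePart (m : ℕ) (h : ℤ → ℂ → ℂ) (τ z : ℂ) : ℂ :=
  ∑ l ∈ Finset.range (2 * m), h (l : ℤ) τ * jTheta m (l : ℤ) τ z

/-- `T` is a set of representatives for `S/ℤ²`. -/
def IsRepSet (S : Set (ℚ × ℚ)) (T : Finset (ℚ × ℚ)) : Prop :=
  (↑T : Set (ℚ × ℚ)) ⊆ S ∧
    ∀ s ∈ S, ∃! t : ℚ × ℚ, t ∈ T ∧ ∃ lam mu : ℤ, s.1 = t.1 + (lam : ℚ) ∧ s.2 = t.2 + (mu : ℚ)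



lemma ee_add (a b : ℂ) : ee (a + b) = ee a * ee b := by
  simp only [ee, mul_add, Complex.exp_add]

lemma ee_ne_zero (a : ℂ) : ee a ≠ 0 := Complex.exp_ne_zero _

lemma ee_neg (a : ℂ) : ee (-a) = (ee a)⁻¹ := by
  simp only [ee, mul_neg, Complex.exp_neg]

lemma ee_sub (a b : ℂ) : ee (a - b) = ee a / ee b := by
  rw [sub_eq_add_neg, ee_add, ee_neg, div_eq_mul_inv]

lemma ee_zero : ee 0 = 1 := by simp [ee]

lemma ee_int_mul (n : ℤ) (a : ℂ) : ee ((n : ℂ) * a) = ee a ^ n := by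
  simp only [ee]; rw [← Complex.exp_int_mul]; congr 1; ring

lemma ee_eq_one_iff (a : ℂ) : ee a = 1 ↔ ∃ n : ℤ, a = n := by
  have h : (2 * (Real.pi : ℂ) * Complex.I) ≠ 0 := Complex.two_pi_I_ne_zero
  rw [ee, Complex.exp_eq_one_iff]
  constructor
  · rintro ⟨n, hn⟩
    refine ⟨n, mul_left_cancel₀ h (by rw [hn]; ring)⟩
  · rintro ⟨n, rfl⟩
    exact ⟨n, by ring⟩

lemma ee_int (n : ℤ) : ee (n : ℂ) = 1 := (ee_eq_one_iff _).2 ⟨n, rfl⟩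

lemma ee_one : ee 1 = 1 := by simpa using ee_int 1

lemma norm_ee (a : ℂ) : ‖ee a‖ = Real.exp (-(2 * Real.pi * a.im)) := by
  rw [ee, Complex.norm_exp]; congr 1
  simp [Complex.mul_re, Complex.mul_im]

lemma hasDerivAt_ee (a : ℂ) : HasDerivAt ee (2 * (Real.pi : ℂ) * Complex.I * ee a) a := by
  have : HasDerivAt (fun x : ℂ => 2 * (Real.pi : ℂ) * Complex.I * x)
      (2 * (Real.pi : ℂ) * Complex.I) a := by
    simpa using (hasDerivAt_id a).const_mul (2 * (Real.pi : ℂ) * Complex.I)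
  have h2 := this.cexp
  have e : 2 * (Real.pi : ℂ) * Complex.I * ee a =
      Complex.exp (2 * (Real.pi : ℂ) * Complex.I * a) * (2 * (Real.pi : ℂ) * Complex.I) := by
    rw [ee]; ring
  rw [e]
  exact h2

@[fun_prop] lemma differentiable_ee : Differentiable ℂ ee :=
  fun a => (hasDerivAt_ee a).differentiableAt

@[fun_prop] lemma continuous_ee : Continuous ee := differentiable_ee.continuous

lemma Rc_differentiableAt (c : ℝ) {w : ℂ} (h0 : w ≠ 0) (h1 : w ≠ 1) :
    DifferentiableAt ℂ (Rc c) w := by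
  have h1' : w - 1 ≠ 0 := sub_ne_zero.2 h1
  by_cases hc : (⌈c⌉ : ℝ) = c
  · have : Rc c = fun y : ℂ => 1 / 2 * y ^ ⌈c⌉ * (y + 1) / (y - 1) := by
      funext y; rw [Rc, if_pos hc]
    rw [this]
    have := differentiableAt_zpow (𝕜 := ℂ) (m := ⌈c⌉) (x := w) |>.2 (Or.inl h0)
    fun_prop (disch := assumption)
  · have : Rc c = fun y : ℂ => y ^ ⌈c⌉ / (y - 1) := by
      funext y; rw [Rc, if_neg hc]
    rw [this]
    have := differentiableAt_zpow (𝕜 := ℂ) (m := ⌈c⌉) (x := w) |>.2 (Or.inl h0)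
    fun_prop (disch := assumption)

lemma Rc_norm (c : ℝ) {w : ℂ} (h : ‖w‖ ≤ 1 / 2 ∨ 2 ≤ ‖w‖) :
    ‖Rc c w‖ ≤ 2 * ‖w‖ ^ ⌈c⌉ := by
  have hz : 0 ≤ ‖w‖ ^ ⌈c⌉ := zpow_nonneg (norm_nonneg _) _
  have hw := norm_nonneg w
  have a1 : ‖w‖ - 1 ≤ ‖w - 1‖ := by simpa using norm_sub_norm_le w 1
  have a2 : 1 - ‖w‖ ≤ ‖w - 1‖ := by
    have := norm_sub_norm_le (1 : ℂ) w
    rw [norm_sub_rev] at this; simpa using this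
  have a3 : ‖w + 1‖ ≤ ‖w‖ + 1 := by simpa using norm_add_le w 1
  have a0 : 0 < ‖w - 1‖ := by rcases h with h | h <;> linarith
  unfold Rc
  split_ifs with hc
  · have : ‖(1 / 2 : ℂ) * w ^ ⌈c⌉ * (w + 1) / (w - 1)‖
        = 1 / 2 * ‖w‖ ^ ⌈c⌉ * ‖w + 1‖ / ‖w - 1‖ := by
      simp [norm_zpow]
    rw [this, div_le_iff₀ a0]
    have : ‖w + 1‖ ≤ 4 * ‖w - 1‖ := by rcases h with h | h <;> linarith
    nlinarith
  · rw [norm_div, norm_zpow, div_le_iff₀ a0]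
    have : 1 ≤ 2 * ‖w - 1‖ := by rcases h with h | h <;> linarith
    nlinarith

/-- general term of the averaged sum -/
def gterm (m : ℕ) (c : ℝ) (τ p : ℂ) (lam : ℤ) (z : ℂ) : ℂ :=
  ee ((m : ℂ) * (lam : ℂ) ^ 2 * τ + 2 * (m : ℂ) * (lam : ℂ) * z) *
    Rc c (ee ((lam : ℂ) * τ + z) / ee p)

lemma two_le_exp_two_pi : (2:ℝ) ≤ Real.exp (2 * Real.pi) := by
  have := Real.add_one_le_exp (2 * Real.pi)
  have := Real.pi_gt_three
  linarith

lemma gterm_bound (m : ℕ) (hm : 0 < m) (c : ℝ) (τ p : ℂ) (hτ : 0 < τ.im) (B : ℝ) (hB : 0 ≤ B) :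
    ∃ u : ℤ → ℝ, Summable u ∧ ∀ᶠ lam : ℤ in cofinite, ∀ z : ℂ, |z.im| ≤ B →
      ‖gterm m c τ p lam z‖ ≤ u lam ∧ ee ((lam : ℂ) * τ + z) / ee p ≠ 1 := by
  set v := τ.im with hv
  set N := ⌈c⌉ with hN
  have hm' : (0:ℝ) < m := by exact_mod_cast hm
  have hpi := Real.pi_pos
  refine ⟨fun lam => 2 * Real.exp (2 * Real.pi * |(N:ℝ)| * (B + |p.im|)) *
    (((|lam| : ℤ) : ℝ) ^ 0 * Real.exp (-Real.pi * ((2 * m * v) * lam ^ 2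
      - 2 * (2 * m * B + |(N:ℝ)| * v) * ((|lam| : ℤ) : ℝ)))), ?_, ?_⟩
  · exact (summable_pow_mul_jacobiTheta₂_term_bound _ (by positivity) 0).mul_left _
  · have hev : ∀ᶠ lam : ℤ in cofinite, B + |p.im| + 1 ≤ |(lam:ℝ)| * v := by
      have : Tendsto (fun lam : ℤ => |(lam:ℝ)| * v) cofinite atTop := by
        apply Tendsto.atTop_mul_const hτ
        have := tendsto_norm_cocompact_atTop (E := ℝ) |>.comp Int.tendsto_coe_cofinite
        exact this
      exact this.eventually_ge_atTop _
    filter_upwards [hev] with lam hlam z hz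
    set w := ee ((lam : ℂ) * τ + z) / ee p with hw
    set t := (lam:ℝ) * v + z.im - p.im with ht
    have hnw : ‖w‖ = Real.exp (-(2 * Real.pi * t)) := by
      rw [hw, ← ee_sub, norm_ee]; congr 1; simp [ht, hv]
    have ht1 : 1 ≤ |t| := by
      have h1 : |(lam:ℝ) * v| = |(lam:ℝ)| * v := by rw [abs_mul, abs_of_pos hτ]
      have h2 : |(lam:ℝ) * v| ≤ |t| + |z.im| + |p.im| := by
        have : (lam:ℝ) * v = t - z.im + p.im := by rw [ht]; ring
        rw [this]
        exact (abs_add_le _ _).trans (by gcongr; exact abs_sub _ _)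
      linarith
    have hcase : ‖w‖ ≤ 1 / 2 ∨ 2 ≤ ‖w‖ := by
      rw [hnw]
      rcases le_abs.1 ht1 with h | h
      · left
        rw [Real.exp_neg, one_div]
        apply inv_anti₀ (by norm_num)
        exact two_le_exp_two_pi.trans (Real.exp_le_exp.2 (by nlinarith))
      · right
        exact two_le_exp_two_pi.trans (Real.exp_le_exp.2 (by nlinarith))
    refine ⟨?_, ?_⟩
    · rw [gterm, norm_mul, norm_ee]
      refine (mul_le_mul_of_nonneg_left (Rc_norm c hcase) (Real.exp_pos _).le).trans ?_
      rw [hnw, ← Real.rpow_intCast, ← Real.exp_mul, pow_zero, one_mul, mul_left_comm, ← Real.exp_add,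
        mul_assoc (2:ℝ) (Real.exp _) (Real.exp _), ← Real.exp_add]
      refine mul_le_mul_of_nonneg_left (Real.exp_le_exp.2 ?_) (by norm_num)
      have him : ((m : ℂ) * (lam : ℂ) ^ 2 * τ + 2 * (m : ℂ) * (lam : ℂ) * z).im
          = m * lam ^ 2 * v + 2 * m * lam * z.im := by
        have e1 : (m : ℂ) * (lam : ℂ) ^ 2 * τ = ((m * lam ^ 2 : ℝ) : ℂ) * τ := by push_cast; ring
        have e2 : 2 * (m : ℂ) * (lam : ℂ) * z = ((2 * m * lam : ℝ) : ℂ) * z := by push_cast; ring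
        rw [e1, e2, Complex.add_im, Complex.im_ofReal_mul, Complex.im_ofReal_mul]
      rw [him]
      push_cast
      have k1 : -(lam * z.im) ≤ |(lam:ℝ)| * B := by
        refine (neg_le_abs _).trans ?_
        rw [abs_mul]; gcongr
      have k2 : -(N * t) ≤ |(N:ℝ)| * (|(lam:ℝ)| * v + B + |p.im|) := by
        refine (neg_le_abs _).trans ?_
        rw [abs_mul]; gcongr
        rw [ht]
        refine (abs_sub _ _).trans ?_
        gcongr
        refine (abs_add_le _ _).trans ?_
        rw [abs_mul, abs_of_pos hτ]; gcongr
      have k1' := mul_le_mul_of_nonneg_left k1 (show (0:ℝ) ≤ 4 * Real.pi * m by positivity)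
      have k2' := mul_le_mul_of_nonneg_left k2 (show (0:ℝ) ≤ 2 * Real.pi by positivity)
      nlinarith
    · intro h
      rw [h] at hcase
      norm_num at hcase

lemma gterm_summable (m : ℕ) (hm : 0 < m) (c : ℝ) (τ p : ℂ) (hτ : 0 < τ.im) (z : ℂ) :
    Summable (fun lam => gterm m c τ p lam z) := by
  obtain ⟨u, hu, h⟩ := gterm_bound m hm c τ p hτ |z.im| (abs_nonneg _)
  exact Summable.of_norm_bounded_eventually hu (h.mono fun lam hl => (hl z le_rfl).1)

lemma gterm_differentiableAt (m : ℕ) (c : ℝ) (τ p : ℂ) (lam : ℤ) (z : ℂ)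
    (h : ee ((lam : ℂ) * τ + z) / ee p ≠ 1) : DifferentiableAt ℂ (gterm m c τ p lam) z := by
  have h0 : ee ((lam : ℂ) * τ + z) / ee p ≠ 0 := div_ne_zero (ee_ne_zero _) (ee_ne_zero _)
  have h1 : DifferentiableAt ℂ (fun z => Rc c (ee ((lam : ℂ) * τ + z) / ee p)) z :=
    DifferentiableAt.comp (f := fun z => ee ((lam : ℂ) * τ + z) / ee p) z
      (Rc_differentiableAt c h0 h) (by fun_prop)
  unfold gterm
  fun_prop

lemma tsum_gterm_differentiableAt (m : ℕ) (hm : 0 < m) (c : ℝ) (τ p : ℂ) (hτ : 0 < τ.im)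
    (F0 : Finset ℤ) (z0 : ℂ) (h : ∀ lam : ℤ, lam ∉ F0 → ee ((lam : ℂ) * τ + z0) / ee p ≠ 1) :
    DifferentiableAt ℂ (fun z => ∑' lam : {x : ℤ // x ∉ F0}, gterm m c τ p lam z) z0 := by
  obtain ⟨u, hu, hev⟩ := gterm_bound m hm c τ p hτ (|z0.im| + 1) (by positivity)
  have hfin := Filter.eventually_cofinite.1 hev
  set F := hfin.toFinset with hF
  have hFp : ∀ lam : ℤ, lam ∉ F → ∀ z : ℂ, |z.im| ≤ |z0.im| + 1 →
      ‖gterm m c τ p lam z‖ ≤ u lam ∧ ee ((lam : ℂ) * τ + z) / ee p ≠ 1 := by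
    intro lam hl
    simpa [hF] using hl
  have hsplit : (fun z => ∑' lam : {x : ℤ // x ∉ F0}, gterm m c τ p lam z) =
      fun z => (∑ lam ∈ F \ F0, gterm m c τ p lam z) +
        ∑' lam : {x : ℤ // x ∉ F ∪ F0}, gterm m c τ p lam z := by
    funext z
    have hs := gterm_summable m hm c τ p hτ z
    have e1 := hs.sum_add_tsum_subtype_compl F0
    have e2 := hs.sum_add_tsum_subtype_compl (F ∪ F0)
    rw [← e1, ← Finset.sdiff_union_self_eq_union, Finset.sum_union Finset.sdiff_disjoint] at e2
    have := e2
    rw [Finset.sdiff_union_self_eq_union] at this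
    linear_combination -this
  rw [hsplit]
  refine DifferentiableAt.add ?_ ?_
  · apply DifferentiableAt.fun_sum
    intro lam hl
    exact gterm_differentiableAt _ _ _ _ _ _ (h lam (Finset.mem_sdiff.1 hl).2)
  · have hopen : IsOpen {z : ℂ | |z.im| < |z0.im| + 1} :=
      isOpen_lt (by fun_prop) continuous_const
    refine (differentiableOn_tsum_of_summable_norm
      (F := fun (lam : {x : ℤ // x ∉ F ∪ F0}) z => gterm m c τ p lam z)
      (u := fun lam => u lam) (hu.subtype _) ?_ hopen ?_).differentiableAt
      (hopen.mem_nhds (by simp))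
    · intro lam z hz
      have := lam.2
      simp only [Finset.mem_union, not_or] at this
      exact (gterm_differentiableAt _ _ _ _ _ _
        (hFp lam this.1 z (le_of_lt hz)).2).differentiableWithinAt
    · intro lam z hz
      have := lam.2
      simp only [Finset.mem_union, not_or] at this
      exact (hFp lam this.1 z (le_of_lt hz)).1

lemma eventually_ok (m : ℕ) (hm : 0 < m) (τ p : ℂ) (hτ : 0 < τ.im) (z0 : ℂ) :
    ∀ᶠ z in 𝓝[≠] z0, ∀ lam : ℤ, ee ((lam : ℂ) * τ + z) / ee p ≠ 1 := by
  obtain ⟨u, hu, hev⟩ := gterm_bound m hm 0 τ p hτ (|z0.im| + 1) (by positivity)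
  have hfin := Filter.eventually_cofinite.1 hev
  have hopen : IsOpen {z : ℂ | |z.im| < |z0.im| + 1} :=
    isOpen_lt (by fun_prop) continuous_const
  have h1 : ∀ᶠ z in 𝓝[≠] z0, |z.im| < |z0.im| + 1 :=
    nhdsWithin_le_nhds (hopen.mem_nhds (by simp))
  have h2 : ∀ᶠ z in 𝓝[≠] z0, ∀ lam ∈ hfin.toFinset, ee ((lam : ℂ) * τ + z) / ee p ≠ 1 := by
    rw [Filter.eventually_all_finset]
    intro lam _
    have hd : HasDerivAt (fun z => ee ((lam : ℂ) * τ + z) / ee p)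
        (2 * (Real.pi : ℂ) * Complex.I * ee ((lam : ℂ) * τ + z0) / ee p) z0 :=
      ((hasDerivAt_ee _).comp_const_add _ _).div_const _
    exact hd.eventually_ne (div_ne_zero (mul_ne_zero Complex.two_pi_I_ne_zero (ee_ne_zero _))
      (ee_ne_zero _))
  filter_upwards [h1, h2] with z hz1 hz2 lam
  by_cases hl : lam ∈ hfin.toFinset
  · exact hz2 lam hl
  · simp only [Set.Finite.mem_toFinset, Set.mem_ofPred_eq, not_not] at hl
    exact (hl z hz1.le).2


lemma circ_int (G : ℂ → ℂ) (hG : ∀ u : ℂ, ‖u‖ < 1 → DifferentiableAt ℂ G u) (W0 : ℂ)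
    (hW : ‖W0‖ < 1) : ∫ x in (0:ℝ)..1, G (W0 * ee (x : ℂ)) = G 0 := by
  have h1 : DiffContOnCl ℂ (fun u => G (W0 * u)) (Metric.ball 0 |(1:ℝ)|) := by
    apply DifferentiableOn.diffContOnCl
    intro u hu
    have hu' : ‖u‖ ≤ 1 := by
      rw [abs_one, closure_ball _ one_ne_zero] at hu
      simpa using hu
    have : ‖W0 * u‖ < 1 := by
      rw [norm_mul]; nlinarith [norm_nonneg W0, norm_nonneg u]
    exact (DifferentiableAt.comp (f := fun u => W0 * u) u (hG _ this)
      (by fun_prop)).differentiableWithinAt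
  have h2 := h1.circleAverage
  rw [Real.circleAverage_def] at h2
  simp only [mul_zero] at h2
  rw [← h2]
  have h3 := intervalIntegral.integral_comp_mul_left (a := 0) (b := 1)
    (fun θ : ℝ => G (W0 * circleMap 0 1 θ)) (c := 2 * Real.pi) (by positivity)
  simp only [mul_zero, mul_one] at h3
  rw [← h3]
  refine intervalIntegral.integral_congr fun x _ => ?_
  simp only [circleMap, ee]
  congr 2
  push_cast
  simp only [zero_add, one_mul]
  congr 1
  ring

lemma circ_int_inv (H : ℂ → ℂ) (hH : ∀ u : ℂ, ‖u‖ < 1 → DifferentiableAt ℂ H u) (W0 : ℂ)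
    (hW : 1 < ‖W0‖) : ∫ x in (0:ℝ)..1, H ((W0 * ee (x : ℂ))⁻¹) = H 0 := by
  have hW' : ‖W0⁻¹‖ < 1 := by rw [norm_inv]; exact inv_lt_one_of_one_lt₀ hW
  rw [← circ_int H hH W0⁻¹ hW']
  have h3 := intervalIntegral.integral_comp_sub_left (a := 0) (b := 1)
    (fun x : ℝ => H (W0⁻¹ * ee (x : ℂ))) 1
  simp only [sub_self, sub_zero] at h3
  rw [← h3]
  refine intervalIntegral.integral_congr fun x _ => ?_
  congr 1
  rw [mul_inv]; congr 1
  push_cast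
  rw [ee_sub, ee_one, one_div]

lemma Q_small_int (c : ℝ) (hc : (⌈c⌉ : ℝ) = c) (n : ℤ) (k : ℕ) (hk : (k : ℤ) = n + ⌈c⌉) (W0 : ℂ)
    (h0 : W0 ≠ 0) (hW : ‖W0‖ < 1) :
    ∫ x in (0:ℝ)..1, (W0 * ee (x : ℂ)) ^ n * Rc c (W0 * ee (x : ℂ)) = -(1 / 2) * 0 ^ k := by
  have := circ_int (fun u => 1 / 2 * u ^ k * (u + 1) / (u - 1)) (fun u hu => by
    have : u - 1 ≠ 0 := by
      intro h; rw [sub_eq_zero] at h; simp [h] at hu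
    fun_prop (disch := assumption)) W0 hW
  rw [show -(1 / 2 : ℂ) * 0 ^ k = 1 / 2 * 0 ^ k * (0 + 1) / (0 - 1) by ring, ← this]
  refine intervalIntegral.integral_congr fun x _ => ?_
  have hne : W0 * ee (x : ℂ) ≠ 0 := mul_ne_zero h0 (ee_ne_zero _)
  simp only [Rc, if_pos hc]
  rw [← zpow_natCast, hk, zpow_add₀ hne]
  ring

lemma Q_small_nonint (c : ℝ) (hc : (⌈c⌉ : ℝ) ≠ c) (n : ℤ) (k : ℕ) (hk : (k : ℤ) = n + ⌈c⌉) (W0 : ℂ)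
    (h0 : W0 ≠ 0) (hW : ‖W0‖ < 1) :
    ∫ x in (0:ℝ)..1, (W0 * ee (x : ℂ)) ^ n * Rc c (W0 * ee (x : ℂ)) = - 0 ^ k := by
  have := circ_int (fun u => u ^ k / (u - 1)) (fun u hu => by
    have : u - 1 ≠ 0 := by
      intro h; rw [sub_eq_zero] at h; simp [h] at hu
    fun_prop (disch := assumption)) W0 hW
  rw [show -(0 ^ k : ℂ) = 0 ^ k / (0 - 1) by ring, ← this]
  refine intervalIntegral.integral_congr fun x _ => ?_
  have hne : W0 * ee (x : ℂ) ≠ 0 := mul_ne_zero h0 (ee_ne_zero _)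
  simp only [Rc, if_neg hc]
  rw [← zpow_natCast, hk, zpow_add₀ hne]
  ring

lemma Q_large_int (c : ℝ) (hc : (⌈c⌉ : ℝ) = c) (n : ℤ) (k : ℕ) (hk : (k : ℤ) = -(n + ⌈c⌉)) (W0 : ℂ)
    (hW : 1 < ‖W0‖) :
    ∫ x in (0:ℝ)..1, (W0 * ee (x : ℂ)) ^ n * Rc c (W0 * ee (x : ℂ)) = (1 / 2) * 0 ^ k := by
  have h0 : W0 ≠ 0 := by rintro rfl; simp at hW; linarith
  have := circ_int_inv (fun u => 1 / 2 * u ^ k * (1 + u) / (1 - u)) (fun u hu => by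
    have : 1 - u ≠ 0 := by
      intro h; rw [sub_eq_zero] at h; simp [← h] at hu
    fun_prop (disch := assumption)) W0 hW
  rw [show (1 / 2 : ℂ) * 0 ^ k = 1 / 2 * 0 ^ k * (1 + 0) / (1 - 0) by norm_num, ← this]
  refine intervalIntegral.integral_congr fun x _ => ?_
  have hne : W0 * ee (x : ℂ) ≠ 0 := mul_ne_zero h0 (ee_ne_zero _)
  have hn1 : ‖W0 * ee (x : ℂ)‖ = ‖W0‖ := by rw [norm_mul, norm_ee]; simp
  simp only [Rc, if_pos hc]
  generalize W0 * ee (x : ℂ) = W at *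
  have hW1 : W - 1 ≠ 0 := by
    intro h; rw [sub_eq_zero] at h; rw [h] at hn1; simp at hn1; linarith
  rw [← zpow_natCast, hk, inv_zpow', neg_neg, zpow_add₀ hne]
  rw [show 1 + W⁻¹ = (W + 1) / W by field_simp, show 1 - W⁻¹ = (W - 1) / W by field_simp]
  field_simp

lemma Q_large_nonint (c : ℝ) (hc : (⌈c⌉ : ℝ) ≠ c) (n : ℤ) (k : ℕ) (hk : (k : ℤ) = 1 - (n + ⌈c⌉))
    (W0 : ℂ) (hW : 1 < ‖W0‖) :
    ∫ x in (0:ℝ)..1, (W0 * ee (x : ℂ)) ^ n * Rc c (W0 * ee (x : ℂ)) = 0 ^ k := by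
  have h0 : W0 ≠ 0 := by rintro rfl; simp at hW; linarith
  have := circ_int_inv (fun u => u ^ k / (1 - u)) (fun u hu => by
    have : 1 - u ≠ 0 := by
      intro h; rw [sub_eq_zero] at h; simp [← h] at hu
    fun_prop (disch := assumption)) W0 hW
  rw [show (0 : ℂ) ^ k = 0 ^ k / (1 - 0) by norm_num, ← this]
  refine intervalIntegral.integral_congr fun x _ => ?_
  have hne : W0 * ee (x : ℂ) ≠ 0 := mul_ne_zero h0 (ee_ne_zero _)
  have hn1 : ‖W0 * ee (x : ℂ)‖ = ‖W0‖ := by rw [norm_mul, norm_ee]; simp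
  simp only [Rc, if_neg hc]
  generalize W0 * ee (x : ℂ) = W at *
  have hW1 : W - 1 ≠ 0 := by
    intro h; rw [sub_eq_zero] at h; rw [h] at hn1; simp at hn1; linarith
  rw [← zpow_natCast, hk, inv_zpow', show -(1 - (n + ⌈c⌉)) = n + ⌈c⌉ - 1 by ring,
    zpow_sub_one₀ hne, zpow_add₀ hne]
  rw [show 1 - W⁻¹ = (W - 1) / W by field_simp]
  field_simp

lemma delta_exists (c : ℝ) : ∃ δ > 0, ∀ η : ℝ, 0 < η → η < δ → ∀ n : ℤ,
    (1 ≤ n + ⌈c⌉ → 0 < n + c - η) ∧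
    (n + ⌈c⌉ ≤ 0 → ((⌈c⌉ : ℝ) ≠ c ∨ n + ⌈c⌉ ≤ -1) → n + c + η < 0) := by
  have h1 := Int.le_ceil c
  have h2 := Int.ceil_lt_add_one c
  by_cases hc : (⌈c⌉ : ℝ) = c
  · refine ⟨1, one_pos, fun η h0 hη n => ⟨fun h => ?_, fun _ h => ?_⟩⟩
    · have : (1:ℝ) ≤ n + ⌈c⌉ := by exact_mod_cast h
      linarith
    · have h := h.resolve_left (by simpa using hc)
      have : (n + ⌈c⌉ : ℝ) ≤ -1 := by exact_mod_cast h
      linarith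
  · have h3 : c < ⌈c⌉ := lt_of_le_of_ne h1 (Ne.symm hc)
    refine ⟨min (c - (⌈c⌉ - 1)) (⌈c⌉ - c), lt_min (by linarith) (by linarith),
      fun η h0 hη n => ⟨fun h => ?_, fun h _ => ?_⟩⟩
    · have : (1:ℝ) ≤ n + ⌈c⌉ := by exact_mod_cast h
      have := hη.trans_le (min_le_left _ _)
      linarith
    · have : (n + ⌈c⌉ : ℝ) ≤ 0 := by exact_mod_cast h
      have := hη.trans_le (min_le_right _ _)
      linarith

lemma hasSum_line (m : ℕ) (hm : 0 < m) (c : ℝ) (τ p : ℂ) (hτ : 0 < τ.im) (z0 : ℂ)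
    (w : ℝ → ℂ) (hw : Continuous w)
    (hok : ∀ x : ℝ, ∀ lam : ℤ, ee ((lam : ℂ) * τ + ((x : ℂ) + z0)) / ee p ≠ 1) :
    HasSum (fun lam => ∫ x in (0:ℝ)..1, gterm m c τ p lam ((x : ℂ) + z0) * w x)
      (∫ x in (0:ℝ)..1, (∑' lam, gterm m c τ p lam ((x : ℂ) + z0)) * w x) := by
  obtain ⟨u, hu, hev⟩ := gterm_bound m hm c τ p hτ |z0.im| (abs_nonneg _)
  have hcont : ∀ lam, Continuous fun x : ℝ => gterm m c τ p lam ((x : ℂ) + z0) := by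
    intro lam
    rw [continuous_iff_continuousAt]
    intro x
    exact ContinuousAt.comp (f := fun x : ℝ => (x : ℂ) + z0)
      (gterm_differentiableAt m c τ p lam _ (hok x lam)).continuousAt (by fun_prop)
  have hM : ∀ lam, ∃ M, ∀ x ∈ Set.Icc (0:ℝ) 1, ‖gterm m c τ p lam ((x : ℂ) + z0)‖ ≤ M :=
    fun lam => isCompact_Icc.exists_bound_of_continuousOn (hcont lam).continuousOn
  choose M hM using hM
  obtain ⟨K, hK⟩ := isCompact_Icc.exists_bound_of_continuousOn (s := Set.Icc (0:ℝ) 1)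
    hw.continuousOn
  have hfin := Filter.eventually_cofinite.1 hev
  set F := hfin.toFinset with hF
  have hFp : ∀ lam : ℤ, lam ∉ F → ∀ z : ℂ, |z.im| ≤ |z0.im| →
      ‖gterm m c τ p lam z‖ ≤ u lam ∧ ee ((lam : ℂ) * τ + z) / ee p ≠ 1 := by
    intro lam hl
    simpa [hF] using hl
  set u' : ℤ → ℝ := fun lam => if lam ∈ F then M lam else u lam with hu'
  have hsu' : Summable u' := by
    refine (summable_congr_cofinite ?_).2 hu
    filter_upwards [F.finite_toSet.compl_mem_cofinite] with lam hl
    have : lam ∉ F := by simpa using hl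
    simp [hu', this]
  have hb : ∀ lam, ∀ x ∈ Set.Icc (0:ℝ) 1, ‖gterm m c τ p lam ((x : ℂ) + z0)‖ ≤ u' lam := by
    intro lam x hx
    by_cases hl : lam ∈ F
    · simpa [hu', hl] using hM lam x hx
    · simpa [hu', hl] using (hFp lam hl _ (by simp)).1
  have hIoc : ∀ x : ℝ, x ∈ Set.uIoc (0:ℝ) 1 → x ∈ Set.Icc (0:ℝ) 1 := by
    intro x hx
    rw [Set.uIoc_of_le zero_le_one] at hx
    exact ⟨hx.1.le, hx.2⟩
  apply intervalIntegral.hasSum_integral_of_dominated_convergence (fun lam _ => u' lam * K)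
  · intro lam
    exact ((hcont lam).mul hw).aestronglyMeasurable
  · intro lam
    refine ae_of_all _ fun x hx => ?_
    rw [norm_mul]
    exact mul_le_mul (hb lam x (hIoc x hx)) (hK x (hIoc x hx)) (norm_nonneg _)
      ((norm_nonneg _).trans (hb lam x (hIoc x hx)))
  · exact ae_of_all _ fun x hx => hsu'.mul_right K
  · exact intervalIntegrable_const
  · refine ae_of_all _ fun x hx => ?_
    exact (gterm_summable m hm c τ p hτ _).hasSum.mul_right _


lemma norm_W (m : ℕ) (hm : 0 < m) (c : ℝ) (τ p : ℂ) (hτ : 0 < τ.im)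
    (hc : c * τ.im = -(2 * m * p.im)) (l : ℤ) (σ : ℝ) (x : ℝ) (lam : ℤ) :
    ‖ee ((lam : ℂ) * τ + ((x : ℂ) + ((σ : ℂ) * Complex.I - (l : ℂ) * τ / (2 * (m : ℂ))))) / ee p‖ =
      Real.exp (-(2 * Real.pi * (τ.im / (2 * m) *
        (((2 * m * lam - l : ℤ) : ℝ) + c + 2 * m * σ / τ.im)))) := by
  have hm' : (m:ℝ) ≠ 0 := by positivity
  rw [← ee_sub, norm_ee]
  congr 4
  have e : (l : ℂ) * τ / (2 * (m : ℂ)) = ((l / (2 * m) : ℝ) : ℂ) * τ := by push_cast; ring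
  rw [e]
  have e2 : ((lam : ℂ) * τ).im = lam * τ.im := by
    rw [← Complex.ofReal_intCast, Complex.im_ofReal_mul]
  simp only [Complex.sub_im, Complex.add_im, Complex.im_ofReal_mul, Complex.ofReal_im,
    Complex.I_im, e2]
  push_cast
  field_simp
  linear_combination -hc

lemma gterm_line (m : ℕ) (hm : 0 < m) (c : ℝ) (τ p : ℂ) (l : ℤ) (σ : ℝ) (x : ℝ) (lam : ℤ) :
    gterm m c τ p lam ((x : ℂ) + ((σ : ℂ) * Complex.I - (l : ℂ) * τ / (2 * (m : ℂ)))) *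
      ee (-(l : ℂ) * ((x : ℂ) + (σ : ℂ) * Complex.I)) =
    ee ((m : ℂ) * (lam : ℂ) ^ 2 * τ - (l : ℂ) ^ 2 * τ / (2 * m) -
        ((2 * m * lam - l : ℤ) : ℂ) * ((lam : ℂ) * τ - p)) *
      ((ee ((lam : ℂ) * τ + (((0 : ℝ) : ℂ) + ((σ : ℂ) * Complex.I
          - (l : ℂ) * τ / (2 * (m : ℂ))))) / ee p * ee (x : ℂ)) ^ (2 * m * lam - l : ℤ) *
        Rc c (ee ((lam : ℂ) * τ + (((0 : ℝ) : ℂ) + ((σ : ℂ) * Complex.I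
          - (l : ℂ) * τ / (2 * (m : ℂ))))) / ee p * ee (x : ℂ))) := by
  have hm' : (m:ℂ) ≠ 0 := by exact_mod_cast hm.ne'
  rw [← ee_sub, ← ee_add, ← ee_int_mul, gterm, ← ee_sub, ← mul_assoc, ← ee_add, mul_right_comm,
    ← ee_add]
  congr 2
  · push_cast
    field_simp
    ring
  · congr 1
    push_cast
    ring

lemma canon_zero (m : ℕ) (hm : 0 < m) (c : ℝ) (τ p : ℂ) (hτ : 0 < τ.im)
    (hc : c * τ.im = -(2 * m * p.im)) (l : ℤ) :
    ∀ᶠ ε : ℝ in 𝓝[>] (0:ℝ),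
      (∀ x : ℝ, ∀ lam : ℤ, ee ((lam : ℂ) * τ + ((x : ℂ) + ((ε : ℂ) * Complex.I
        - (l : ℂ) * τ / (2 * (m : ℂ))))) / ee p ≠ 1) ∧
      (∀ x : ℝ, ∀ lam : ℤ, ee ((lam : ℂ) * τ + ((x : ℂ) + (((-ε : ℝ) : ℂ) * Complex.I
        - (l : ℂ) * τ / (2 * (m : ℂ))))) / ee p ≠ 1) ∧
      (∫ x in (0:ℝ)..1, (∑' lam, gterm m c τ p lam ((x : ℂ) + ((ε : ℂ) * Complex.I
          - (l : ℂ) * τ / (2 * (m : ℂ))))) * ee (-(l : ℂ) * ((x : ℂ) + (ε : ℂ) * Complex.I))) +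
      (∫ x in (0:ℝ)..1, (∑' lam, gterm m c τ p lam ((x : ℂ) + (((-ε : ℝ) : ℂ) * Complex.I
          - (l : ℂ) * τ / (2 * (m : ℂ))))) *
            ee (-(l : ℂ) * ((x : ℂ) + ((-ε : ℝ) : ℂ) * Complex.I))) = 0 := by
  obtain ⟨δ, hδ, hd⟩ := delta_exists c
  have hm' : (0:ℝ) < m := by exact_mod_cast hm
  have hpi := Real.pi_pos
  have hev : Set.Ioo (0:ℝ) (δ * τ.im / (2 * m)) ∈ 𝓝[>] (0:ℝ) :=
    Ioo_mem_nhdsGT (by positivity)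
  filter_upwards [hev] with ε hε
  have hη0 : 0 < 2 * m * ε / τ.im := by have := hε.1; positivity
  have hη1 : 2 * m * ε / τ.im < δ := by
    rw [div_lt_iff₀ hτ]
    have := hε.2
    rw [lt_div_iff₀ (by positivity)] at this
    linarith
  have hd := hd _ hη0 hη1
  have key := norm_W m hm c τ p hτ hc l
  have hneg : ∀ r : ℝ, 2 * m * (-ε) / τ.im = -(2 * m * ε / τ.im) := fun r => by ring
  have hlt : ∀ r : ℝ, 0 < r → Real.exp (-(2 * Real.pi * (τ.im / (2 * m) * r))) < 1 := by
    intro r hr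
    rw [Real.exp_lt_one_iff]
    have : 0 < 2 * Real.pi * (τ.im / (2 * m) * r) := by positivity
    linarith
  have hgt : ∀ r : ℝ, r < 0 → 1 < Real.exp (-(2 * Real.pi * (τ.im / (2 * m) * r))) := by
    intro r hr
    rw [Real.one_lt_exp_iff]
    have : 0 < 2 * Real.pi * (τ.im / (2 * m) * (-r)) := by
      have : 0 < -r := by linarith
      positivity
    linarith
  -- the sign dichotomy
  have hz : ∀ n : ℤ, ((⌈c⌉ : ℝ) = c ∧ n + ⌈c⌉ = 0) → (n : ℝ) + c = 0 := by
    rintro n ⟨h1, h2⟩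
    rw [← h1]; exact_mod_cast h2
  have hne : ∀ σ : ℝ, (σ = ε ∨ σ = -ε) → ∀ x : ℝ, ∀ lam : ℤ,
      ee ((lam : ℂ) * τ + ((x : ℂ) + ((σ : ℂ) * Complex.I
        - (l : ℂ) * τ / (2 * (m : ℂ))))) / ee p ≠ 1 := by
    intro σ hσ x lam h1
    have hk := key σ x lam
    rw [h1, norm_one] at hk
    set n : ℤ := 2 * m * lam - l
    have hr : (n:ℝ) + c + 2 * m * σ / τ.im ≠ 0 := by
      by_cases hn : 1 ≤ n + ⌈c⌉
      · have := (hd n).1 hn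
        rcases hσ with rfl | rfl
        · linarith
        · rw [hneg 0]; linarith
      · by_cases h0 : (⌈c⌉ : ℝ) = c ∧ n + ⌈c⌉ = 0
        · rw [hz n h0]
          rcases hσ with rfl | rfl
          · linarith
          · rw [hneg 0]; linarith
        · have := (hd n).2 (by omega) (by
            by_cases h : (⌈c⌉ : ℝ) = c
            · right
              have : n + ⌈c⌉ ≠ 0 := fun h' => h0 ⟨h, h'⟩
              omega
            · exact Or.inl h)
          rcases hσ with rfl | rfl
          · linarith
          · rw [hneg 0]; linarith
    rcases lt_or_gt_of_ne hr with h | h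
    · exact absurd hk (hgt _ h).ne
    · exact absurd hk (hlt _ h).ne'
  refine ⟨hne ε (Or.inl rfl), hne (-ε) (Or.inr rfl), ?_⟩
  have s1 := hasSum_line m hm c τ p hτ _ (fun x => ee (-(l : ℂ) * ((x : ℂ) + (ε : ℂ) * Complex.I)))
    (by fun_prop) (hne ε (Or.inl rfl))
  have s2 := hasSum_line m hm c τ p hτ _
    (fun x => ee (-(l : ℂ) * ((x : ℂ) + ((-ε : ℝ) : ℂ) * Complex.I)))
    (by fun_prop) (hne (-ε) (Or.inr rfl))
  have s := s1.add s2
  rw [← s.tsum_eq]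
  convert tsum_zero with lam
  simp only [gterm_line m hm c τ p l]
  rw [intervalIntegral.integral_const_mul, intervalIntegral.integral_const_mul, ← mul_add]
  refine mul_eq_zero_of_right _ ?_
  have k1 := key ε 0 lam
  have k2 := key (-ε) 0 lam
  set n : ℤ := 2 * m * lam - l
  set W1 := ee ((lam : ℂ) * τ + (((0 : ℝ) : ℂ) + ((ε : ℂ) * Complex.I
          - (l : ℂ) * τ / (2 * (m : ℂ))))) / ee p with hW1
  set W2 := ee ((lam : ℂ) * τ + (((0 : ℝ) : ℂ) + (((-ε : ℝ) : ℂ) * Complex.I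
          - (l : ℂ) * τ / (2 * (m : ℂ))))) / ee p with hW2
  have hW10 : W1 ≠ 0 := div_ne_zero (ee_ne_zero _) (ee_ne_zero _)
  have hW20 : W2 ≠ 0 := div_ne_zero (ee_ne_zero _) (ee_ne_zero _)
  rw [hneg 0] at k2
  by_cases hn : 1 ≤ n + ⌈c⌉
  · have hh := (hd n).1 hn
    have a1 : ‖W1‖ < 1 := by rw [k1]; exact hlt _ (by linarith)
    have a2 : ‖W2‖ < 1 := by rw [k2]; exact hlt _ (by linarith)
    have hk : (((n + ⌈c⌉).toNat : ℕ) : ℤ) = n + ⌈c⌉ := Int.toNat_of_nonneg (by omega)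
    have hk0 : (n + ⌈c⌉).toNat ≠ 0 := by omega
    by_cases h : (⌈c⌉ : ℝ) = c
    · rw [Q_small_int c h n _ hk W1 hW10 a1, Q_small_int c h n _ hk W2 hW20 a2]
      simp [hk0]
    · rw [Q_small_nonint c h n _ hk W1 hW10 a1, Q_small_nonint c h n _ hk W2 hW20 a2]
      simp [hk0]
  · by_cases h0 : (⌈c⌉ : ℝ) = c ∧ n + ⌈c⌉ = 0
    · have hnc := hz n h0
      have a1 : ‖W1‖ < 1 := by rw [k1]; exact hlt _ (by linarith)
      have a2 : 1 < ‖W2‖ := by rw [k2]; exact hgt _ (by linarith)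
      rw [Q_small_int c h0.1 n 0 (by simp [h0.2]) W1 hW10 a1,
        Q_large_int c h0.1 n 0 (by simp [h0.2]) W2 a2]
      simp
    · by_cases h : (⌈c⌉ : ℝ) = c
      · have hnn : n + ⌈c⌉ ≠ 0 := fun h' => h0 ⟨h, h'⟩
        have hh := (hd n).2 (by omega) (Or.inr (by omega))
        have a1 : 1 < ‖W1‖ := by rw [k1]; exact hgt _ (by linarith)
        have a2 : 1 < ‖W2‖ := by rw [k2]; exact hgt _ (by linarith)
        have hk : (((-(n + ⌈c⌉)).toNat : ℕ) : ℤ) = -(n + ⌈c⌉) := Int.toNat_of_nonneg (by omega)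
        have hk0 : (-(n + ⌈c⌉)).toNat ≠ 0 := by omega
        rw [Q_large_int c h n _ hk W1 a1, Q_large_int c h n _ hk W2 a2]
        simp only [zero_pow hk0]; simp
      · have hh := (hd n).2 (by omega) (Or.inl h)
        have a1 : 1 < ‖W1‖ := by rw [k1]; exact hgt _ (by linarith)
        have a2 : 1 < ‖W2‖ := by rw [k2]; exact hgt _ (by linarith)
        have hk : (((1 - (n + ⌈c⌉)).toNat : ℕ) : ℤ) = 1 - (n + ⌈c⌉) :=
          Int.toNat_of_nonneg (by omega)
        have hk0 : (1 - (n + ⌈c⌉)).toNat ≠ 0 := by omega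
        rw [Q_large_nonint c h n _ hk W1 a1, Q_large_nonint c h n _ hk W2 a2]
        simp only [zero_pow hk0]; simp


lemma AppellA_eq (m : ℕ) (s : ℚ × ℚ) (τ z : ℂ) :
    AppellA m s τ z = ee (-(m : ℂ) * (s.1 : ℚ) * zpt s τ) *
      ∑' lam, gterm m ((-(2 * (m : ℚ) * s.1) : ℚ) : ℝ) τ (zpt s τ) lam z := rfl

lemma Rc_shift (c : ℝ) (k : ℤ) (w : ℂ) (hw : w ≠ 0) : Rc (c - k) w = w ^ (-k) * Rc c w := by
  unfold Rc
  have h1 : ⌈c - (k:ℝ)⌉ = ⌈c⌉ + -k := by rw [Int.ceil_sub_intCast]; ring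
  have h2 : ((⌈c - (k:ℝ)⌉ : ℝ) = c - k) ↔ ((⌈c⌉ : ℝ) = c) := by
    rw [h1]; push_cast
    constructor <;> intro h <;> linarith
  rw [h1] at *
  simp only [h2, zpow_add₀ hw]
  split_ifs <;> ring

lemma gterm_shift (m : ℕ) (c : ℝ) (τ p : ℂ) (lam mu κ : ℤ) (z : ℂ) :
    gterm m (c - ((2 * m * lam : ℤ) : ℝ)) τ (p + (lam : ℂ) * τ + (mu : ℂ)) (κ + lam) z =
      ee ((m : ℂ) * (lam : ℂ) ^ 2 * τ + 2 * (m : ℂ) * (lam : ℂ) * p) * gterm m c τ p κ z := by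
  unfold gterm
  have hw : ee (((κ + lam : ℤ) : ℂ) * τ + z) / ee (p + (lam : ℂ) * τ + (mu : ℂ)) =
      ee ((κ : ℂ) * τ + z) / ee p := by
    rw [ee_add (p + (lam : ℂ) * τ), ee_int, mul_one, ← ee_sub, ← ee_sub]
    congr 1; push_cast; ring
  rw [hw, Rc_shift _ _ _ (div_ne_zero (ee_ne_zero _) (ee_ne_zero _)), ← ee_sub, ← ee_int_mul,
    ← mul_assoc, ← mul_assoc, ← ee_add, ← ee_add]
  congr 2
  push_cast; ring

lemma zpt_shift (s : ℚ × ℚ) (lam mu : ℤ) (τ : ℂ) :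
    zpt (s.1 + (lam : ℚ), s.2 + (mu : ℚ)) τ = zpt s τ + (lam : ℂ) * τ + (mu : ℂ) := by
  simp only [zpt]; push_cast; ring

lemma AppellA_shift (m : ℕ) (s : ℚ × ℚ) (lam mu : ℤ) (τ z : ℂ) :
    AppellA m (s.1 + (lam : ℚ), s.2 + (mu : ℚ)) τ z =
      ee ((m : ℂ) * (lam * (s.2 : ℚ) - (s.1 : ℚ) * mu)) * AppellA m s τ z := by
  rw [AppellA_eq, AppellA_eq, zpt_shift]
  rw [← (Equiv.addRight lam).tsum_eq]
  simp only [Equiv.coe_addRight]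
  have hc : ((-(2 * (m : ℚ) * (s.1 + (lam : ℚ))) : ℚ) : ℝ) =
      ((-(2 * (m : ℚ) * s.1) : ℚ) : ℝ) - ((2 * m * lam : ℤ) : ℝ) := by push_cast; ring
  simp only [hc, gterm_shift]
  rw [tsum_mul_left, ← mul_assoc, ← mul_assoc, ← ee_add, ← ee_add]
  congr 1
  have : ee ((m * lam * mu : ℤ) : ℂ) = 1 := ee_int _
  rw [← mul_one (ee _), ← this, ← ee_add]
  congr 1
  simp only [zpt]
  push_cast
  ring

lemma D_shift (m : ℕ) (S : Set (ℚ × ℚ)) (φ : ℂ → ℂ → ℂ) (hφ : EllipticLaw m φ)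
    (D : ℚ × ℚ → ℂ → ℂ) (hD : IsResidueFactor m S φ D) (s : ℚ × ℚ) (hs : s ∈ S)
    (lam mu : ℤ) (hs' : (s.1 + (lam : ℚ), s.2 + (mu : ℚ)) ∈ S) (τ : ℂ) (hτ : 0 < τ.im) :
    D (s.1 + (lam : ℚ), s.2 + (mu : ℚ)) τ =
      ee (-((m : ℂ) * (lam * (s.2 : ℚ) - (s.1 : ℚ) * mu))) * D s τ := by
  have h1 := hD s hs τ hτ
  have h2 := hD _ hs' τ hτ
  rw [zpt_shift] at h2
  set p := zpt s τ with hp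
  have hmap : Tendsto (fun z => z + (lam : ℂ) * τ + (mu : ℂ)) (𝓝[≠] p)
      (𝓝[≠] (p + (lam : ℂ) * τ + (mu : ℂ))) := by
    apply tendsto_nhdsWithin_of_tendsto_nhds_of_eventually_within
    · have : Continuous fun z : ℂ => z + (lam : ℂ) * τ + (mu : ℂ) := by fun_prop
      exact (this.tendsto p).mono_left nhdsWithin_le_nhds
    · filter_upwards [self_mem_nhdsWithin] with z hz
      intro h
      apply hz
      simpa using h
  have h3 := h2.comp hmap
  -- continuous multiplier
  have hmul : Tendsto (fun z : ℂ => ee ((m : ℂ) * ((s.1 + (lam : ℚ) : ℚ) : ℂ) *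
        (p + (lam : ℂ) * τ + (mu : ℂ)) - (m : ℂ) * (s.1 : ℚ) * p +
        -(m : ℂ) * ((lam : ℂ) ^ 2 * τ + 2 * (lam : ℂ) * z))) (𝓝[≠] p)
      (𝓝 (ee ((m : ℂ) * ((s.1 + (lam : ℚ) : ℚ) : ℂ) *
        (p + (lam : ℂ) * τ + (mu : ℂ)) - (m : ℂ) * (s.1 : ℚ) * p +
        -(m : ℂ) * ((lam : ℂ) ^ 2 * τ + 2 * (lam : ℂ) * p)))) := by
    refine (Continuous.tendsto ?_ p).mono_left nhdsWithin_le_nhds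
    fun_prop
  have h4 := hmul.mul h1
  have h5 := tendsto_nhds_unique (h3.congr (fun z => ?_)) h4
  · rw [h5]
    congr 1
    have : ee ((m * lam * mu : ℤ) : ℂ) = 1 := ee_int _
    rw [← mul_one (ee (-_)), ← this, ← ee_add]
    congr 1
    simp only [hp, zpt]
    push_cast
    ring
  · simp only [Function.comp]
    rw [hφ τ hτ z lam mu, ee_add, ee_sub]
    have := ee_ne_zero ((m : ℂ) * (s.1 : ℚ) * p)
    generalize ee ((m : ℂ) * (s.1 : ℚ) * p) = A at *
    generalize ee ((m : ℂ) * ((s.1 + (lam : ℚ) : ℚ) : ℂ) * (p + (lam : ℂ) * τ + (mu : ℂ))) = B at *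
    field_simp
    ring

lemma part_two (m : ℕ) (S : Set (ℚ × ℚ)) (φ : ℂ → ℂ → ℂ) (hφ : EllipticLaw m φ)
    (D : ℚ × ℚ → ℂ → ℂ) (hD : IsResidueFactor m S φ D) (s : ℚ × ℚ) (hs : s ∈ S)
    (lam mu : ℤ) (hs' : (s.1 + (lam : ℚ), s.2 + (mu : ℚ)) ∈ S) (τ : ℂ) (hτ : 0 < τ.im) (z : ℂ) :
    D (s.1 + (lam : ℚ), s.2 + (mu : ℚ)) τ * AppellA m (s.1 + (lam : ℚ), s.2 + (mu : ℚ)) τ z =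
        D s τ * AppellA m s τ z := by
  rw [D_shift m S φ hφ D hD s hs lam mu hs' τ hτ, AppellA_shift, ee_neg]
  have := ee_ne_zero ((m : ℂ) * (lam * (s.2 : ℚ) - (s.1 : ℚ) * mu))
  field_simp

lemma part_one (m : ℕ) (hm : 0 < m) (φ : ℂ → ℂ → ℂ) (hφ : EllipticLaw m φ)
    (h : ℤ → ℂ → ℂ) (hh : IsCanonCoeff m φ h) (l : ℤ) (τ : ℂ) (hτ : 0 < τ.im) :
    h (l + 2 * (m : ℤ)) τ = h l τ := by
  have hm' : (m:ℂ) ≠ 0 := by exact_mod_cast hm.ne'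
  have h1 := hh l τ hτ
  have h2 := hh (l + 2 * (m : ℤ)) τ hτ
  have e : ∀ w : ℂ, φ τ (w - ((l + 2 * (m : ℤ) : ℤ) : ℂ) * τ / (2 * (m : ℂ))) *
      ee (-((l + 2 * (m : ℤ) : ℤ) : ℂ) * w) =
      ee (-((m : ℂ) * τ) - l * τ) * (φ τ (w - (l : ℂ) * τ / (2 * (m : ℂ))) * ee (-(l : ℂ) * w)) := by
    intro w
    have := hφ τ hτ (w - (l : ℂ) * τ / (2 * (m : ℂ))) (-1) 0
    have e1 : w - ((l + 2 * (m : ℤ) : ℤ) : ℂ) * τ / (2 * (m : ℂ)) =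
        w - (l : ℂ) * τ / (2 * (m : ℂ)) + ((-1 : ℤ) : ℂ) * τ + ((0 : ℤ) : ℂ) := by
      push_cast; field_simp; ring
    rw [e1, this, mul_right_comm, ← ee_add, ← mul_assoc, mul_right_comm (ee _), ← ee_add]
    congr 2
    push_cast; field_simp; ring
  have h3 := h1.const_mul (ee (-((m : ℂ) * τ) - l * τ))
  have h4 := tendsto_nhds_unique (h2.congr fun ε => ?_) h3
  · rw [← mul_assoc, ← ee_add] at h4
    refine mul_left_cancel₀ (ee_ne_zero _) (h4.trans ?_)
    congr 2
    push_cast; field_simp; ring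
  · simp only [e, intervalIntegral.integral_const_mul]
    ring

lemma tendsto_inv_ee (p : ℂ) : Tendsto (fun z => (z - p) / (ee z / ee p - 1)) (𝓝[≠] p)
    (𝓝 (1 / (2 * (Real.pi : ℂ) * Complex.I))) := by
  have hd : HasDerivAt (fun z => ee z / ee p) (2 * (Real.pi : ℂ) * Complex.I) p := by
    have := (hasDerivAt_ee p).div_const (ee p)
    rwa [mul_div_assoc, div_self (ee_ne_zero p), mul_one] at this
  have h1 := (hasDerivAt_iff_tendsto_slope.1 hd).inv₀ Complex.two_pi_I_ne_zero
  rw [one_div]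
  refine h1.congr fun z => ?_
  rw [slope_def_field, div_self (ee_ne_zero p), inv_div]

lemma appell_residue (m : ℕ) (hm : 0 < m) (c : ℝ) (τ p : ℂ) (hτ : 0 < τ.im) :
    Tendsto (fun z => (z - p) * ∑' lam, gterm m c τ p lam z) (𝓝[≠] p)
      (𝓝 (1 / (2 * (Real.pi : ℂ) * Complex.I))) := by
  have hok : ∀ lam : ℤ, lam ∉ ({0} : Finset ℤ) → ee ((lam : ℂ) * τ + p) / ee p ≠ 1 := by
    intro lam hl h
    rw [← ee_sub, add_sub_cancel_right] at h
    obtain ⟨n, hn⟩ := (ee_eq_one_iff _).1 h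
    have := congrArg Complex.im hn
    rw [← Complex.ofReal_intCast, Complex.im_ofReal_mul, Complex.intCast_im] at this
    rcases mul_eq_zero.1 this with h | h
    · exact hl (by simpa using h)
    · exact hτ.ne' h
  have h1 := (tsum_gterm_differentiableAt m hm c τ p hτ {0} p hok).continuousAt.tendsto.mono_left
    (nhdsWithin_le_nhds (s := {p}ᶜ))
  have h2 : Tendsto (fun z : ℂ => z - p) (𝓝[≠] p) (𝓝 0) := by
    have : Continuous fun z : ℂ => z - p := by fun_prop
    simpa using (this.tendsto p).mono_left (nhdsWithin_le_nhds (s := {p}ᶜ))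
  have h3 := h2.mul h1
  have h4 : Tendsto (fun z => (z - p) * gterm m c τ p 0 z) (𝓝[≠] p)
      (𝓝 (1 / (2 * (Real.pi : ℂ) * Complex.I))) := by
    have hw : ContinuousAt (fun z => ee z / ee p) p := by fun_prop
    have hw1 : ee p / ee p = 1 := div_self (ee_ne_zero p)
    have hz : ContinuousAt (fun z => (ee z / ee p) ^ ⌈c⌉) p :=
      hw.zpow₀ _ (Or.inl (by rw [hw1]; exact one_ne_zero))
    by_cases hci : (⌈c⌉ : ℝ) = c
    · have hρ : Tendsto (fun z => 1 / 2 * (ee z / ee p) ^ ⌈c⌉ * (ee z / ee p + 1)) (𝓝[≠] p)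
          (𝓝 1) := by
        have : ContinuousAt (fun z => 1 / 2 * (ee z / ee p) ^ ⌈c⌉ * (ee z / ee p + 1)) p := by
          fun_prop
        have := this.tendsto.mono_left (nhdsWithin_le_nhds (s := {p}ᶜ))
        rw [hw1] at this
        convert this using 2
        norm_num
      have := hρ.mul (tendsto_inv_ee p)
      rw [one_mul] at this
      refine this.congr fun z => ?_
      simp only [gterm, Rc, if_pos hci]
      simp [ee_zero]
      ring
    · have hρ : Tendsto (fun z => (ee z / ee p) ^ ⌈c⌉) (𝓝[≠] p) (𝓝 1) := by
        have := hz.tendsto.mono_left (nhdsWithin_le_nhds (s := {p}ᶜ))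
        rw [hw1] at this
        convert this using 2
        norm_num
      have := hρ.mul (tendsto_inv_ee p)
      rw [one_mul] at this
      refine this.congr fun z => ?_
      simp only [gterm, Rc, if_neg hci]
      simp [ee_zero]
      ring
  have h5 := h4.add h3
  rw [zero_mul, add_zero] at h5
  refine h5.congr fun z => ?_
  have := (gterm_summable m hm c τ p hτ z).sum_add_tsum_subtype_compl {0}
  rw [← this, Finset.sum_singleton]
  ring

lemma zpt_im (s : ℚ × ℚ) (τ : ℂ) : (zpt s τ).im = s.1 * τ.im := by
  simp only [zpt]
  rw [Complex.add_im, ← Complex.ofReal_ratCast, Complex.im_ofReal_mul, Complex.ratCast_im, add_zero]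

lemma c_rel (m : ℕ) (s : ℚ × ℚ) (τ : ℂ) :
    ((-(2 * (m : ℚ) * s.1) : ℚ) : ℝ) * τ.im = -(2 * m * (zpt s τ).im) := by
  rw [zpt_im]; push_cast; ring


lemma entire_const (G : ℂ → ℂ) (hG : Differentiable ℂ G) (hp : ∀ z, G (z + 1) = G z) :
    ∃ a, ∀ w : ℂ, ∫ x in (0:ℝ)..1, G ((x : ℂ) + w) = a := by
  obtain ⟨P, hP⟩ := hG.isExactOn_univ
  have hP : ∀ z, HasDerivAt P (G z) z := fun z => hP z (Set.mem_univ z)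
  have hI : ∀ w : ℂ, ∫ x in (0:ℝ)..1, G ((x : ℂ) + w) = P (w + 1) - P w := by
    intro w
    have hd : ∀ x ∈ Set.uIcc (0:ℝ) 1,
        HasDerivAt (fun x : ℝ => P ((x : ℂ) + w)) (G ((x : ℂ) + w)) x := by
      intro x _
      exact HasDerivAt.comp_ofReal (e := fun y => P (y + w)) ((hP _).comp_add_const _ _)
    have hc : Continuous fun x : ℝ => G ((x : ℂ) + w) := by
      have := hG.continuous
      fun_prop
    rw [intervalIntegral.integral_eq_sub_of_hasDerivAt hd (hc.intervalIntegrable _ _)]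
    simp [add_comm]
  have hK : ∀ w, HasDerivAt (fun w => P (w + 1) - P w) 0 w := by
    intro w
    have := ((hP (w + 1)).comp_add_const w 1).sub (hP w)
    rwa [hp, sub_self] at this
  refine ⟨P (0 + 1) - P 0, fun w => ?_⟩
  rw [hI]
  exact is_const_of_deriv_eq_zero (fun w => (hK w).differentiableAt) (fun w => (hK w).deriv) w 0

lemma entire_fourier (ψ : ℂ → ℂ) (hψ : Continuous ψ) (hp : ∀ z, ψ (z + 1) = ψ z)
    (a : ℤ → ℂ)
    (ha : ∀ (n : ℤ) (w : ℂ), ∫ x in (0:ℝ)..1, ψ ((x : ℂ) + w) * ee (-(n : ℂ) * ((x : ℂ) + w)) = a n) (z : ℂ)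
    (hs : Summable fun n : ℤ => a n * ee (n * z)) :
    HasSum (fun n : ℤ => a n * ee (n * z)) (ψ z) := by
  have : Fact ((0:ℝ) < 1) := ⟨one_pos⟩
  have hper : Function.Periodic (fun x : ℝ => ψ ((x : ℂ) + z)) 1 := by
    intro x
    simp only
    rw [← hp ((x : ℂ) + z)]
    congr 1; push_cast; ring
  have hcont : Continuous (fun x : ℝ => ψ ((x : ℂ) + z)) := by fun_prop
  have hcl : Continuous (hper.lift : AddCircle (1:ℝ) → ℂ) := continuous_coinduced_dom.2 hcont
  set F : C(AddCircle (1:ℝ), ℂ) := ⟨hper.lift, hcl⟩ with hF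
  have hco : ∀ n : ℤ, fourierCoeff F n = a n * ee (n * z) := by
    intro n
    rw [fourierCoeff_eq_intervalIntegral F n 0, ← ha n z, ← intervalIntegral.integral_mul_const]
    simp only [zero_add, div_one, one_smul]
    refine intervalIntegral.integral_congr fun x _ => ?_
    have e1 : F (x : AddCircle (1:ℝ)) = ψ ((x : ℂ) + z) := hper.lift_coe x
    simp only [e1, fourier_coe_apply, smul_eq_mul]
    rw [mul_assoc (ψ _), ← ee_add, mul_comm]
    congr 1
    simp only [ee]
    congr 1
    push_cast
    ring
  have h := has_pointwise_sum_fourier_series_of_summable (f := F) (by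
    refine hs.congr fun n => ?_
    rw [hco]) ((0:ℝ) : AddCircle (1:ℝ))
  have e0 : F ((0:ℝ) : AddCircle (1:ℝ)) = ψ z := by
    have : F ((0:ℝ) : AddCircle (1:ℝ)) = ψ (((0:ℝ) : ℂ) + z) := hper.lift_coe 0
    rw [this]; simp
  rw [e0] at h
  have e2 : (fun n : ℤ => a n * ee (n * z)) =
      fun n : ℤ => fourierCoeff F n • fourier n ((0:ℝ) : AddCircle (1:ℝ)) := by
    funext n
    rw [hco]
    simp
  rw [e2]
  exact h

lemma summable_theta (m : ℕ) (hm : 0 < m) (τ : ℂ) (hτ : 0 < τ.im) (z : ℂ) :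
    Summable fun n : ℤ => ee ((n : ℂ) ^ 2 / (4 * m) * τ + n * z) := by
  have hm' : (0:ℝ) < m := by exact_mod_cast hm
  have hm'' : (m:ℂ) ≠ 0 := by exact_mod_cast hm.ne'
  have h := (summable_jacobiTheta₂_term_iff z (τ / (2 * m))).2 (by
    have : τ / (2 * m) = ((1 / (2 * m) : ℝ) : ℂ) * τ := by push_cast; ring
    rw [this, Complex.im_ofReal_mul]; positivity)
  refine h.congr fun n => ?_
  simp only [jacobiTheta₂_term, ee]
  congr 1
  field_simp
  ring

lemma periodic_mod (m : ℕ) (h : ℤ → ℂ) (hp : ∀ l, h (l + 2 * (m : ℤ)) = h l) (l k : ℤ) :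
    h (l + 2 * (m : ℤ) * k) = h l := by
  induction k using Int.induction_on with
  | zero => simp
  | succ i ih =>
    rw [← ih, ← hp (l + 2 * (m : ℤ) * i)]; congr 1; ring
  | pred i ih =>
    rw [← ih, ← hp (l + 2 * (m : ℤ) * (-i - 1))]; congr 1; ring

lemma theta_sum (m : ℕ) (hm : 0 < m) (τ : ℂ) (hτ : 0 < τ.im) (z : ℂ) (h : ℤ → ℂ)
    (hp : ∀ l, h (l + 2 * (m : ℤ)) = h l) :
    HasSum (fun n : ℤ => h n * ee ((n : ℂ) ^ 2 / (4 * m) * τ + n * z))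
      (∑ l ∈ Finset.range (2 * m), h (l : ℤ) * jTheta m (l : ℤ) τ z) := by
  have : NeZero (2 * m) := ⟨by omega⟩
  have key : ∀ l : Fin (2 * m), HasSum (fun n : ℤ => h ((l : ℕ) : ℤ) *
      ee (((((l : ℕ) : ℤ) : ℂ) + 2 * (m : ℂ) * (n : ℂ)) ^ 2 / (4 * (m : ℂ)) * τ +
      ((((l : ℕ) : ℤ) : ℂ) + 2 * (m : ℂ) * (n : ℂ)) * z))
      (h ((l : ℕ) : ℤ) * jTheta m ((l : ℕ) : ℤ) τ z) := by
    intro l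
    have hinj : Function.Injective fun n : ℤ => ((l : ℕ) : ℤ) + 2 * (m : ℤ) * n := by
      intro a b hab
      have h2 : (2 * (m : ℤ)) ≠ 0 := by omega
      simpa [h2, hm.ne'] using hab
    have := (summable_theta m hm τ hτ z).comp_injective hinj
    refine HasSum.mul_left _ (Summable.hasSum (this.congr fun n => ?_))
    simp only [Function.comp]
    push_cast
    rfl
  rw [← (Int.divModEquiv (2 * m)).symm.hasSum_iff, ← (Equiv.prodComm _ _).hasSum_iff]
  have hbd : Summable (fun n : ℤ => h n * ee ((n : ℂ) ^ 2 / (4 * m) * τ + n * z)) := by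
    refine Summable.of_norm_bounded
      (g := fun n : ℤ => (∑ l ∈ Finset.range (2 * m), ‖h (l : ℤ)‖) *
        ‖ee ((n : ℂ) ^ 2 / (4 * m) * τ + n * z)‖)
      ((summable_theta m hm τ hτ z).norm.mul_left _) fun n => ?_
    rw [norm_mul]
    gcongr
    have h2 : (0:ℤ) < 2 * (m : ℤ) := by omega
    have e : h n = h (((n % (2 * (m:ℤ))).toNat : ℕ) : ℤ) := by
      rw [Int.toNat_of_nonneg (Int.emod_nonneg _ h2.ne'),
        ← periodic_mod m h hp (n % (2 * (m : ℤ))) (n / (2 * (m : ℤ)))]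
      congr 1
      have := Int.emod_add_mul_ediv n (2 * (m:ℤ))
      linarith
    rw [e]
    refine Finset.single_le_sum (f := fun l : ℕ => ‖h (l : ℤ)‖) (fun _ _ => norm_nonneg _) ?_
    have h3 := Int.emod_nonneg n h2.ne'
    have h4 := Int.emod_lt_of_pos n h2
    simp only [Finset.mem_range]
    omega
  have hsum2 : Summable (((fun n : ℤ => h n * ee ((n : ℂ) ^ 2 / (4 * m) * τ + n * z)) ∘
      (Int.divModEquiv (2 * m)).symm) ∘ (Equiv.prodComm (Fin (2 * m)) ℤ)) :=
    (Equiv.summable_iff _).2 ((Equiv.summable_iff _).2 hbd)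
  have := hsum2.hasSum
  have h5 := this.prod_fiberwise (g := fun l : Fin (2 * m) =>
    h ((l : ℕ) : ℤ) * jTheta m ((l : ℕ) : ℤ) τ z) (fun l => by
      have h8 := key l
      convert h8 using 1
      funext n
      simp only [Function.comp, Equiv.prodComm_apply, Prod.swap, Int.divModEquiv_symm_apply]
      have e : n * ((2 * m : ℕ) : ℤ) + ((l : ℕ) : ℤ) = ((l : ℕ) : ℤ) + 2 * (m : ℤ) * n := by
        push_cast; ring
      rw [e, periodic_mod m h hp]
      push_cast
      rfl)
  have h6 := hasSum_fintype fun l : Fin (2 * m) =>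
    h ((l : ℕ) : ℤ) * jTheta m ((l : ℕ) : ℤ) τ z
  have h7 := h5.unique h6
  rw [Finset.sum_range, ← h7]
  exact this

lemma removable (ψ0 : ℂ → ℂ) (good : ℂ → Prop) (hd : ∀ z, good z → DifferentiableAt ℂ ψ0 z)
    (hev : ∀ z0, ∀ᶠ z in 𝓝[≠] z0, good z)
    (hres : ∀ z0, ¬ good z0 → Tendsto (fun z => (z - z0) * ψ0 z) (𝓝[≠] z0) (𝓝 0)) :
    ∃ ψ : ℂ → ℂ, Differentiable ℂ ψ ∧ ∀ z, good z → ψ z = ψ0 z := by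
  have hgood : ∀ z, good z → limUnder (𝓝[≠] z) ψ0 = ψ0 z := fun z hz =>
    ((hd z hz).continuousAt.tendsto.mono_left nhdsWithin_le_nhds).limUnder_eq
  refine ⟨fun z => limUnder (𝓝[≠] z) ψ0, fun z0 => ?_, hgood⟩
  have hsub : Tendsto (fun z : ℂ => z - z0) (𝓝[≠] z0) (𝓝 0) := by
    have : Continuous fun z : ℂ => z - z0 := by fun_prop
    simpa using (this.tendsto z0).mono_left (nhdsWithin_le_nhds (s := {z0}ᶜ))
  have hres' : Tendsto (fun z => (z - z0) * ψ0 z) (𝓝[≠] z0) (𝓝 0) := by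
    by_cases hz : good z0
    · simpa using hsub.mul ((hd z0 hz).continuousAt.tendsto.mono_left nhdsWithin_le_nhds)
    · exact hres z0 hz
  have h1 := differentiableOn_update_limUnder_insert_of_isLittleO (f := ψ0) (c := z0)
    (s := {z | good z}) (hev z0) (fun z hz => (hd z hz).differentiableWithinAt) (by
      rw [Asymptotics.isLittleO_iff_tendsto']
      · have := hres'.sub (hsub.mul_const (ψ0 z0))
        rw [zero_mul, sub_zero] at this
        refine this.congr fun z => ?_
        rw [div_inv_eq_mul]; ring
      · filter_upwards [self_mem_nhdsWithin] with z hz h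
        exact absurd (sub_eq_zero.1 (inv_eq_zero.1 h)) hz)
  have h2 : insert z0 {z | good z} ∈ 𝓝 z0 := insert_mem_nhds_iff.2 (hev z0)
  refine (h1.differentiableAt h2).congr_of_eventuallyEq ?_
  filter_upwards [h2] with z hz
  by_cases hzz : z = z0
  · subst hzz; simp
  · rw [Function.update_of_ne hzz]
    exact hgood z (hz.resolve_left hzz)


lemma ok_of_good (S : Set (ℚ × ℚ))
    (hinv : ∀ s ∈ S, ∀ lam mu : ℤ, (s.1 + (lam : ℚ), s.2 + (mu : ℚ)) ∈ S) (τ z : ℂ)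
    (hz : ∀ s ∈ S, z ≠ zpt s τ) (t : ℚ × ℚ) (ht : t ∈ S) (lam : ℤ) :
    ee ((lam : ℂ) * τ + z) / ee (zpt t τ) ≠ 1 := by
  intro h
  rw [← ee_sub] at h
  obtain ⟨n, hn⟩ := (ee_eq_one_iff _).1 h
  refine hz _ (hinv t ht (-lam) n) ?_
  rw [zpt_shift]
  push_cast
  linear_combination hn

lemma good_of_ok (S : Set (ℚ × ℚ)) (T : Finset (ℚ × ℚ)) (hT : IsRepSet S T) (τ z : ℂ)
    (h : ∀ t ∈ T, ∀ lam : ℤ, ee ((lam : ℂ) * τ + z) / ee (zpt t τ) ≠ 1) (s : ℚ × ℚ)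
    (hs : s ∈ S) : z ≠ zpt s τ := by
  intro hz
  obtain ⟨t, ⟨ht, lam, mu, h1, h2⟩, -⟩ := hT.2 s hs
  refine h t ht (-lam) ?_
  rw [← ee_sub, ee_eq_one_iff]
  refine ⟨mu, ?_⟩
  have e : s = (t.1 + (lam : ℚ), t.2 + (mu : ℚ)) := Prod.ext h1 h2
  rw [hz, e, zpt_shift]
  push_cast
  ring

lemma zpt_inj (s t : ℚ × ℚ) (τ : ℂ) (hτ : 0 < τ.im) (h : zpt s τ = zpt t τ) : s = t := by
  have h1 := congrArg Complex.im h
  rw [zpt_im, zpt_im] at h1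
  have h2 : s.1 = t.1 := by exact_mod_cast mul_right_cancel₀ hτ.ne' h1
  refine Prod.ext h2 ?_
  simp only [zpt, h2] at h
  exact_mod_cast add_left_cancel h

lemma appell_diff (m : ℕ) (hm : 0 < m) (t : ℚ × ℚ) (τ : ℂ) (hτ : 0 < τ.im) (z : ℂ)
    (hz : ∀ lam : ℤ, ee ((lam : ℂ) * τ + z) / ee (zpt t τ) ≠ 1) :
    DifferentiableAt ℂ (fun z => AppellA m t τ z) z := by
  have h1 := tsum_gterm_differentiableAt m hm ((-(2 * (m : ℚ) * t.1) : ℚ) : ℝ) τ (zpt t τ) hτ ∅ z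
    (fun lam _ => hz lam)
  have h2 := h1.const_mul (ee (-(m : ℂ) * (t.1 : ℚ) * zpt t τ))
  refine h2.congr_of_eventuallyEq (Filter.Eventually.of_forall fun z => ?_)
  beta_reduce
  rw [AppellA_eq, ← (gterm_summable m hm _ τ (zpt t τ) hτ z).sum_add_tsum_subtype_compl ∅]
  simp only [Finset.sum_empty, zero_add]

lemma appell_per (m : ℕ) (t : ℚ × ℚ) (τ z : ℂ) : AppellA m t τ (z + 1) = AppellA m t τ z := by
  rw [AppellA_eq, AppellA_eq]
  congr 1
  refine tsum_congr fun lam => ?_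
  simp only [gterm]
  have e1 : ee ((lam : ℂ) * τ + (z + 1)) = ee ((lam : ℂ) * τ + z) := by
    rw [← add_assoc, ee_add _ 1, ee_one, mul_one]
  have e2 : ee ((m : ℂ) * (lam : ℂ) ^ 2 * τ + 2 * (m : ℂ) * (lam : ℂ) * (z + 1)) =
      ee ((m : ℂ) * (lam : ℂ) ^ 2 * τ + 2 * (m : ℂ) * (lam : ℂ) * z) := by
    have : ee ((2 * m * lam : ℤ) : ℂ) = 1 := ee_int _
    push_cast at this
    rw [mul_add, mul_one, ← add_assoc, ee_add _ (2 * (m : ℂ) * (lam : ℂ)), this, mul_one]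
  rw [e1, e2]

lemma sub_tendsto (z0 : ℂ) : Tendsto (fun z : ℂ => z - z0) (𝓝[≠] z0) (𝓝 0) := by
  have : Continuous fun z : ℂ => z - z0 := by fun_prop
  simpa using (this.tendsto z0).mono_left (nhdsWithin_le_nhds (s := {z0}ᶜ))

lemma entire_exists (k : ℤ) (m : ℕ) (hm : 0 < m)
    (S : Set (ℚ × ℚ)) (Φ : MeroJacobiForm k m S)
    (D : ℚ × ℚ → ℂ → ℂ) (hD : IsResidueFactor m S Φ.toFun D)
    (T : Finset (ℚ × ℚ)) (hT : IsRepSet S T) (τ : ℂ) (hτ : 0 < τ.im) :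
    ∃ ψ : ℂ → ℂ, Differentiable ℂ ψ ∧ (∀ z, ψ (z + 1) = ψ z) ∧
      ∀ z, (∀ s ∈ S, z ≠ zpt s τ) → ψ z = Φ.toFun τ z - ∑ t ∈ T, D t τ * AppellA m t τ z := by
  have hev : ∀ z0, ∀ᶠ z in 𝓝[≠] z0, ∀ s ∈ S, z ≠ zpt s τ := by
    intro z0
    have h1 : ∀ᶠ z in 𝓝[≠] z0, ∀ t ∈ T, ∀ lam : ℤ,
        ee ((lam : ℂ) * τ + z) / ee (zpt t τ) ≠ 1 :=
      (Filter.eventually_all_finset T).2 fun t _ => eventually_ok m hm τ (zpt t τ) hτ z0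
    exact h1.mono fun z hz => good_of_ok S T hT τ z hz
  obtain ⟨ψ, hψ, hψe⟩ := removable
    (fun z => Φ.toFun τ z - ∑ t ∈ T, D t τ * AppellA m t τ z)
    (fun z => ∀ s ∈ S, z ≠ zpt s τ) (by
      intro z hz
      have h1 : DifferentiableAt ℂ (fun z => Φ.toFun τ z) z :=
        DifferentiableAt.comp (f := fun z : ℂ => (τ, z)) z (Φ.holo τ hτ z hz) (by fun_prop)
      refine h1.sub (DifferentiableAt.fun_sum fun t ht => ?_)
      exact (appell_diff m hm t τ hτ z
        (ok_of_good S Φ.lattice_inv τ z hz t (hT.1 ht))).const_mul _) hev (by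
      intro z0 hz0
      push Not at hz0
      obtain ⟨s, hs, rfl⟩ := hz0
      obtain ⟨t0, ⟨ht0, lam, mu, hs1, hs2⟩, huniq⟩ := hT.2 s hs
      have e : s = (t0.1 + (lam : ℚ), t0.2 + (mu : ℚ)) := Prod.ext hs1 hs2
      have hother : Tendsto (fun z => ∑ t ∈ T.erase t0, D t τ * ((z - zpt s τ) * AppellA m t τ z))
          (𝓝[≠] zpt s τ) (𝓝 0) := by
        rw [← Finset.sum_const_zero (s := T.erase t0)]
        refine tendsto_finsetSum _ fun t ht => ?_
        have hd := appell_diff m hm t τ hτ (zpt s τ) (by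
          intro κ hκ
          rw [← ee_sub] at hκ
          obtain ⟨n, hn⟩ := (ee_eq_one_iff _).1 hκ
          have h1 : zpt s τ = zpt (t.1 + ((-κ : ℤ) : ℚ), t.2 + (n : ℚ)) τ := by
            rw [zpt_shift]
            push_cast
            linear_combination hn
          have h2 := zpt_inj _ _ τ hτ h1
          have h3 := huniq t ⟨Finset.mem_of_mem_erase ht, -κ, n,
            congrArg Prod.fst h2, congrArg Prod.snd h2⟩
          exact Finset.ne_of_mem_erase ht h3)
        have h4 := ((sub_tendsto (zpt s τ)).mul
          (hd.continuousAt.tendsto.mono_left nhdsWithin_le_nhds)).const_mul (D t τ)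
        simpa using h4
      have hf := (hD s hs τ hτ).const_mul
        (ee (-((m : ℂ) * (s.1 : ℚ) * zpt s τ)) / (2 * (Real.pi : ℂ) * Complex.I))
      have hA := (appell_residue m hm ((-(2 * (m : ℚ) * s.1) : ℚ) : ℝ) τ (zpt s τ) hτ).const_mul
        (D s τ * ee (-((m : ℂ) * (s.1 : ℚ) * zpt s τ)))
      have hall := (hf.sub hA).sub hother
      have h0 : ee (-((m : ℂ) * (s.1 : ℚ) * zpt s τ)) / (2 * (Real.pi : ℂ) * Complex.I) * D s τ -
          D s τ * ee (-((m : ℂ) * (s.1 : ℚ) * zpt s τ)) * (1 / (2 * (Real.pi : ℂ) * Complex.I)) -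
          0 = 0 := by ring
      rw [h0] at hall
      refine hall.congr fun z => ?_
      rw [← Finset.add_sum_erase T _ ht0,
        ← part_two m S Φ.toFun Φ.elliptic D hD t0 (hT.1 ht0) lam mu (e ▸ hs) τ hτ z, ← e,
        AppellA_eq m s, mul_sub, mul_add, Finset.mul_sum, ← sub_sub]
      congr 1
      · congr 1
        · rw [ee_neg]
          have h1 := ee_ne_zero ((m : ℂ) * (s.1 : ℚ) * zpt s τ)
          have h2 := Complex.two_pi_I_ne_zero
          generalize 2 * (Real.pi : ℂ) * Complex.I = A at *
          field_simp
        · have e3 : -(m : ℂ) * (s.1 : ℚ) * zpt s τ = -((m : ℂ) * (s.1 : ℚ) * zpt s τ) := by ring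
          rw [e3]
          ring
      · refine Finset.sum_congr rfl fun t _ => ?_
        ring)
  refine ⟨ψ, hψ, fun z0 => ?_, hψe⟩
  have hc : Continuous ψ := hψ.continuous
  have h1 : Tendsto (fun z => ψ (z + 1)) (𝓝[≠] z0) (𝓝 (ψ (z0 + 1))) := by
    have : Continuous fun z => ψ (z + 1) := by fun_prop
    exact (this.tendsto z0).mono_left nhdsWithin_le_nhds
  have h2 : Tendsto ψ (𝓝[≠] z0) (𝓝 (ψ z0)) := (hc.tendsto z0).mono_left nhdsWithin_le_nhds
  refine tendsto_nhds_unique (h1.congr' ?_) h2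
  filter_upwards [hev z0] with z hz
  have hz1 : ∀ s ∈ S, z + 1 ≠ zpt s τ := by
    intro s hs h
    refine hz _ (Φ.lattice_inv s hs 0 (-1)) ?_
    rw [zpt_shift, ← h]
    push_cast
    ring
  rw [hψe z hz, hψe (z + 1) hz1]
  simp only [appell_per]
  congr 1
  have := Φ.elliptic τ hτ z 0 1
  simpa [ee_zero] using this

lemma part_three (k : ℤ) (m : ℕ) (hm : 0 < m)
    (S : Set (ℚ × ℚ)) (Φ : MeroJacobiForm k m S)
    (h : ℤ → ℂ → ℂ) (hh : IsCanonCoeff m Φ.toFun h)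
    (D : ℚ × ℚ → ℂ → ℂ) (hD : IsResidueFactor m S Φ.toFun D)
    (T : Finset (ℚ × ℚ)) (hT : IsRepSet S T) (τ : ℂ) (hτ : 0 < τ.im) (z : ℂ)
    (hz : ∀ s ∈ S, z ≠ zpt s τ) :
    Φ.toFun τ z = finitePart m h τ z + ∑ t ∈ T, D t τ * AppellA m t τ z := by
  have hm' : (m:ℂ) ≠ 0 := by exact_mod_cast hm.ne'
  obtain ⟨ψ, hψ, hψp, hψe⟩ := entire_exists k m hm S Φ D hD T hT τ hτ
  have hψc : Continuous ψ := hψ.continuous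
  have hA : ∀ l : ℤ, ∃ a, ∀ w : ℂ,
      ∫ x in (0:ℝ)..1, ψ ((x : ℂ) + w) * ee (-(l : ℂ) * ((x : ℂ) + w)) = a := by
    intro l
    refine entire_const (fun z => ψ z * ee (-(l : ℂ) * z)) (by fun_prop) fun z => ?_
    rw [hψp, mul_add, ee_add, mul_one (-(l : ℂ))]
    have : ee (-(l : ℂ)) = 1 := by simpa using ee_int (-l)
    rw [this, mul_one]
  choose a ha using hA
  have key : ∀ l : ℤ, a l = ee ((l : ℂ) ^ 2 / (4 * m) * τ) * h l τ := by
    intro l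
    have hlim := hh l τ hτ
    have hev : ∀ᶠ ε : ℝ in 𝓝[>] (0:ℝ), ∀ t ∈ T, _ :=
      (Filter.eventually_all_finset T).2 fun t _ =>
        canon_zero m hm ((-(2 * (m : ℚ) * t.1) : ℚ) : ℝ) τ (zpt t τ) hτ (c_rel m t τ) l
    have line : ∀ σ : ℝ, (∀ t ∈ T, ∀ x : ℝ, ∀ lam : ℤ,
        ee ((lam : ℂ) * τ + ((x : ℂ) + ((σ : ℂ) * Complex.I
          - (l : ℂ) * τ / (2 * (m : ℂ))))) / ee (zpt t τ) ≠ 1) →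
        ∫ x in (0:ℝ)..1, Φ.toFun τ ((x : ℂ) + (σ : ℂ) * Complex.I - (l : ℂ) * τ / (2 * (m : ℂ))) *
                ee (-(l : ℂ) * ((x : ℂ) + (σ : ℂ) * Complex.I)) =
        ee (-(l : ℂ) ^ 2 * τ / (2 * m)) * a l + ∑ t ∈ T,
          D t τ * ee (-(m : ℂ) * (t.1 : ℚ) * zpt t τ) *
          ∫ x in (0:ℝ)..1, (∑' lam, gterm m ((-(2 * (m : ℚ) * t.1) : ℚ) : ℝ) τ (zpt t τ) lam
            ((x : ℂ) + ((σ : ℂ) * Complex.I - (l : ℂ) * τ / (2 * (m : ℂ))))) *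
            ee (-(l : ℂ) * ((x : ℂ) + (σ : ℂ) * Complex.I)) := by
      intro σ hσ
      have hcA : ∀ t ∈ T, Continuous fun x : ℝ => AppellA m t τ
          ((x : ℂ) + ((σ : ℂ) * Complex.I - (l : ℂ) * τ / (2 * (m : ℂ)))) := by
        intro t ht
        rw [continuous_iff_continuousAt]
        intro x
        exact ContinuousAt.comp (f := fun x : ℝ =>
          ((x : ℂ) + ((σ : ℂ) * Complex.I - (l : ℂ) * τ / (2 * (m : ℂ)))))
          (appell_diff m hm t τ hτ _ (hσ t ht x)).continuousAt (by fun_prop)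
      rw [← ha l ((σ : ℂ) * Complex.I - (l : ℂ) * τ / (2 * (m : ℂ))),
        ← intervalIntegral.integral_const_mul]
      simp only [← intervalIntegral.integral_const_mul]
      have e4 : ∀ t : ℚ × ℚ, ∀ x : ℝ, D t τ * ee (-(m : ℂ) * (t.1 : ℚ) * zpt t τ) *
          ((∑' lam, gterm m ((-(2 * (m : ℚ) * t.1) : ℚ) : ℝ) τ (zpt t τ) lam
            ((x : ℂ) + ((σ : ℂ) * Complex.I - (l : ℂ) * τ / (2 * (m : ℂ))))) *
            ee (-(l : ℂ) * ((x : ℂ) + (σ : ℂ) * Complex.I))) =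
          D t τ * AppellA m t τ
          ((x : ℂ) + ((σ : ℂ) * Complex.I - (l : ℂ) * τ / (2 * (m : ℂ)))) *
            ee (-(l : ℂ) * ((x : ℂ) + (σ : ℂ) * Complex.I)) := by
        intro t x
        rw [AppellA_eq]
        ring
      simp only [e4]
      have hcA' : ∀ t ∈ T, Continuous fun x : ℝ => D t τ * AppellA m t τ
          ((x : ℂ) + ((σ : ℂ) * Complex.I - (l : ℂ) * τ / (2 * (m : ℂ)))) *
            ee (-(l : ℂ) * ((x : ℂ) + (σ : ℂ) * Complex.I)) := by
        intro t ht
        have := hcA t ht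
        fun_prop
      rw [← intervalIntegral.integral_finsetSum
          (fun t ht => (hcA' t ht).intervalIntegrable _ _),
        ← intervalIntegral.integral_add (Continuous.intervalIntegrable (by fun_prop) _ _)
          (Continuous.intervalIntegrable (continuous_finsetSum _ hcA') _ _)]
      refine intervalIntegral.integral_congr fun x _ => ?_
      rw [hψe _ (good_of_ok S T hT τ _ fun t ht => hσ t ht x), ← Finset.sum_mul, add_sub_assoc,
        mul_left_comm, ← ee_add]
      have e5 : -(l : ℂ) ^ 2 * τ / (2 * m) + -(l : ℂ) * ((x : ℂ) +
          ((σ : ℂ) * Complex.I - (l : ℂ) * τ / (2 * (m : ℂ)))) =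
          -(l : ℂ) * ((x : ℂ) + (σ : ℂ) * Complex.I) := by
        field_simp
        ring
      rw [e5]
      ring
    have hconst : Tendsto (fun _ : ℝ => ee (-(l : ℂ) ^ 2 * τ / (2 * m)) * a l) (𝓝[>] (0:ℝ))
        (𝓝 (ee (-(l : ℂ) ^ 2 * τ / (2 * m)) * a l)) := tendsto_const_nhds
    have hu := tendsto_nhds_unique (hlim.congr' (by
      filter_upwards [hev] with ε hε
      have l1 := line ε fun t ht => (hε t ht).1
      have l2 := line (-ε) fun t ht => (hε t ht).2.1
      have e6 : ∀ x : ℝ, (x : ℂ) - (ε : ℂ) * Complex.I =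
          (x : ℂ) + ((-ε : ℝ) : ℂ) * Complex.I := by
        intro x
        push_cast
        ring
      simp only [e6]
      rw [l1, l2]
      have e7 : ∀ A B C : ℂ, B + C = 0 → 1 / 2 * (A + B + (A + C)) = A := by
        intro A B C hBC
        linear_combination (1 / 2) * hBC
      refine e7 _ _ _ ?_
      rw [← Finset.sum_add_distrib]
      refine Finset.sum_eq_zero fun t ht => ?_
      rw [← mul_add, (hε t ht).2.2, mul_zero])) hconst
    refine mul_left_cancel₀ (ee_ne_zero (-(l : ℂ) ^ 2 * τ / (2 * m))) (hu.symm.trans ?_)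
    rw [← mul_assoc, ← ee_add]
    congr 2
    field_simp
    ring
  have hth := theta_sum m hm τ hτ z (fun n => h n τ)
    (fun l => part_one m hm Φ.toFun Φ.elliptic h hh l τ hτ)
  have e8 : (fun n : ℤ => h n τ * ee ((n : ℂ) ^ 2 / (4 * m) * τ + n * z)) =
      fun n : ℤ => a n * ee (n * z) := by
    funext n
    rw [key, ee_add]
    ring
  rw [e8] at hth
  have hfin := (entire_fourier ψ hψc hψp a ha z hth.summable).unique hth
  rw [hψe z hz] at hfin
  rw [finitePart, ← hfin]
  ring

/-- Theorem (canonical decomposition, simple poles): a meromorphic Jacobi form of weight `k`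
and index `m` with simple poles supported on `S` has `2m`-periodic canonical Fourier
coefficients; the products `D_s·A^s_m` depend only on the class of `s` in `S/ℤ²`; and `φ`
equals its finite part plus `∑_{s ∈ S/ℤ²} D_s(τ)·A^s_m(τ,z)`. -/
theorem meromorphic_jacobi_decomposition_simple_poles (k : ℤ) (m : ℕ) (hm : 0 < m)
    (S : Set (ℚ × ℚ)) (Φ : MeroJacobiForm k m S) (hpoles : HasSimplePoles Φ)
    (h : ℤ → ℂ → ℂ) (hh : IsCanonCoeff m Φ.toFun h)
    (D : ℚ × ℚ → ℂ → ℂ) (hD : IsResidueFactor m S Φ.toFun D) :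
    (∀ l : ℤ, ∀ τ : ℂ, 0 < τ.im → h (l + 2 * (m : ℤ)) τ = h l τ) ∧
    (∀ s ∈ S, ∀ lam mu : ℤ, ∀ τ : ℂ, 0 < τ.im → ∀ z : ℂ,
      (∀ a b : ℤ, z ≠ zpt s τ + (a : ℂ) * τ + (b : ℂ)) →
      D (s.1 + (lam : ℚ), s.2 + (mu : ℚ)) τ * AppellA m (s.1 + (lam : ℚ), s.2 + (mu : ℚ)) τ z =
        D s τ * AppellA m s τ z) ∧
    (∀ T : Finset (ℚ × ℚ), IsRepSet S T → ∀ τ : ℂ, 0 < τ.im → ∀ z : ℂ,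
      (∀ s ∈ S, z ≠ zpt s τ) →
      Φ.toFun τ z = finitePart m h τ z + ∑ t ∈ T, D t τ * AppellA m t τ z) := by
  exact ⟨fun l τ hτ => part_one m hm Φ.toFun Φ.elliptic h hh l τ hτ,
    fun s hs lam mu τ hτ z _ =>
      part_two m S Φ.toFun Φ.elliptic D hD s hs lam mu (Φ.lattice_inv s hs lam mu) τ hτ z,
    fun T hT τ hτ z hz => part_three k m hm S Φ h hh D hD T hT τ hτ z hz⟩
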